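/- arXiv:1110.4085 — 2 statements merged into one kernel-verified Lean document; each statement's English description precedes it below -/
import Mathlib

section
/- Let n ≥ 1 be an integer, Ω ⊂ ℝⁿ a bounded open set, T > 0, x₀ ∈ ℝⁿ \ cl(Ω), β ∈ (0,1), C₀ > 0 such that ψ ≥ 1 on Ω × (−T,T), where ψ(x,t) = |x−x₀|² − βt² + C₀, and φ = e^{λψ} for λ ≥ 1. Let η ∈ (0, T). Then there exist M > 0 and s₀ > 0 such that for every s ≥ s₀ and every smooth z : ℝⁿ × ℝ → ℝ vanishing for x outside a compact subset of Ω, the weighted energy E_s(t) = (1/2) ∫_Ω e^{2sφ(x,t)} (|∂ₜz|² + |∇z|²) dx satisfies E_s(T−η) ≤ M s ∫_{−T+η}^{T−η} E_s(t) dt + (M/s) ∫_{−T}^{T} ∫_Ω e^{2sφ} |∂ₜ²z − Δz|² dx dt. -/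
open MeasureTheory Real Set
open scoped RealInnerProductSpace

/-- The Laplacian of a real-valued function on Euclidean space. -/
noncomputable def lap {n : ℕ} (f : EuclideanSpace ℝ (Fin n) → ℝ) (x : EuclideanSpace ℝ (Fin n)) : ℝ :=
  ∑ i : Fin n, fderiv ℝ (fun y => fderiv ℝ f y (EuclideanSpace.single i 1)) x (EuclideanSpace.single i 1)

/-- The weight `ψ(x,t) = |x - x₀|² - β t² + C₀`. -/
noncomputable def psi {n : ℕ} (x₀ : EuclideanSpace ℝ (Fin n)) (β C₀ : ℝ)
    (x : EuclideanSpace ℝ (Fin n)) (t : ℝ) : ℝ :=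
  ‖x - x₀‖ ^ 2 - β * t ^ 2 + C₀

/-- The Carleman weight `φ = e^{λψ}`. -/
noncomputable def phi {n : ℕ} (x₀ : EuclideanSpace ℝ (Fin n)) (β C₀ l : ℝ)
    (x : EuclideanSpace ℝ (Fin n)) (t : ℝ) : ℝ :=
  Real.exp (l * psi x₀ β C₀ x t)


/-- Directional derivative. -/
noncomputable def dv {V : Type*} [NormedAddCommGroup V] [NormedSpace ℝ V]
    (v : V) (F : V → ℝ) (q : V) : ℝ := fderiv ℝ F q v

section dvlemmas
variable {V : Type*} [NormedAddCommGroup V] [NormedSpace ℝ V]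

lemma dv_smooth (v : V) {F : V → ℝ} (hF : ContDiff ℝ (⊤ : ℕ∞) F) :
    ContDiff ℝ (⊤ : ℕ∞) (dv v F) := by
  unfold dv
  exact (hF.fderiv_right (m := (⊤ : ℕ∞)) (by exact_mod_cast le_rfl)).clm_apply contDiff_const

lemma smooth_diff {F : V → ℝ} (hF : ContDiff ℝ (⊤ : ℕ∞) F) : Differentiable ℝ F :=
  hF.differentiable (by simp)

lemma dv_mul (v : V) {F G : V → ℝ} (hF : ContDiff ℝ (⊤ : ℕ∞) F) (hG : ContDiff ℝ (⊤ : ℕ∞) G)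
    (q : V) : dv v (fun q => F q * G q) q = dv v F q * G q + F q * dv v G q := by
  unfold dv
  rw [fderiv_fun_mul (smooth_diff hF q) (smooth_diff hG q)]
  simp
  ring

lemma dv_add (v : V) {F G : V → ℝ} (hF : ContDiff ℝ (⊤ : ℕ∞) F) (hG : ContDiff ℝ (⊤ : ℕ∞) G)
    (q : V) : dv v (fun q => F q + G q) q = dv v F q + dv v G q := by
  unfold dv
  rw [fderiv_fun_add (smooth_diff hF q) (smooth_diff hG q)]
  simp

lemma dv_sum {ι : Type*} [Fintype ι] (v : V) {F : ι → V → ℝ}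
    (hF : ∀ i, ContDiff ℝ (⊤ : ℕ∞) (F i))
    (q : V) : dv v (fun q => ∑ i, F i q) q = ∑ i, dv v (F i) q := by
  unfold dv
  rw [fderiv_fun_sum (fun i _ => smooth_diff (hF i) q)]
  simp

lemma dv_exp (v : V) (s : ℝ) {F : V → ℝ} (hF : ContDiff ℝ (⊤ : ℕ∞) F) (q : V) :
    dv v (fun q => Real.exp (2 * s * F q)) q = 2 * s * dv v F q * Real.exp (2 * s * F q) := by
  unfold dv
  rw [fderiv_exp ((smooth_diff hF q).const_mul _), fderiv_const_mul (smooth_diff hF q)]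
  simp
  ring

lemma dv_comm (v w : V) {F : V → ℝ} (hF : ContDiff ℝ (⊤ : ℕ∞) F) (q : V) :
    dv v (dv w F) q = dv w (dv v F) q := by
  have h1 : DifferentiableAt ℝ (fderiv ℝ F) q :=
    ((hF.fderiv_right (m := (⊤ : ℕ∞)) (by exact_mod_cast le_rfl)).differentiable (by simp)) q
  have h2 : ∀ a b : V, dv a (dv b F) q = fderiv ℝ (fderiv ℝ F) q a b := by
    intro a b
    unfold dv
    rw [fderiv_clm_apply h1 (differentiableAt_const _)]
    simp
  rw [h2, h2]
  exact (hF.contDiffAt.isSymmSndFDerivAt (by simp; exact WithTop.coe_le_coe.2 le_top)) v w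

end dvlemmas

section slices
variable {E : Type*} [NormedAddCommGroup E] [NormedSpace ℝ E]

lemma slice_t {F : E × ℝ → ℝ} (hF : ContDiff ℝ (⊤ : ℕ∞) F) (x : E) (t : ℝ) :
    HasDerivAt (fun t => F (x, t)) (dv ((0 : E), (1 : ℝ)) F (x, t)) t := by
  have h1 : HasDerivAt (fun t : ℝ => (x, t)) ((0 : E), (1 : ℝ)) t :=
    (hasDerivAt_const t x).prodMk (hasDerivAt_id t)
  exact (smooth_diff hF (x, t)).hasFDerivAt.comp_hasDerivAt t h1

lemma slice_x {F : E × ℝ → ℝ} (hF : ContDiff ℝ (⊤ : ℕ∞) F) (x : E) (t : ℝ) (v : E) :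
    fderiv ℝ (fun y => F (y, t)) x v = dv (v, (0 : ℝ)) F (x, t) := by
  have h1 : HasFDerivAt (fun y : E => (y, t)) (ContinuousLinearMap.inl ℝ E ℝ) x := by
    simpa using hasFDerivAt_prodMk_left x t
  have h2 := (smooth_diff hF (x, t)).hasFDerivAt.comp x h1
  have h3 : fderiv ℝ (fun y => F (y, t)) x = _ := h2.fderiv
  rw [h3]
  simp [dv]

lemma dv_supp {K : Set E} (hK : IsClosed K) (v : E × ℝ) {F : E × ℝ → ℝ}
    (hF : ∀ x ∉ K, ∀ t, F (x, t) = 0) : ∀ x ∉ K, ∀ t, dv v F (x, t) = 0 := by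
  intro x hx t
  have : F =ᶠ[nhds (x, t)] fun _ => 0 := by
    have h : (Prod.fst ⁻¹' Kᶜ : Set (E × ℝ)) ∈ nhds (x, t) :=
      (hK.isOpen_compl.preimage continuous_fst).mem_nhds hx
    filter_upwards [h] with q hq
    exact hF q.1 hq q.2
  unfold dv
  rw [this.fderiv_eq]
  simp

variable [MeasurableSpace E] [BorelSpace E] [FiniteDimensional ℝ E]
  (μ : Measure E) [μ.IsAddHaarMeasure]

lemma slice_integrable {K : Set E} (hK : IsCompact K) {F : E × ℝ → ℝ} (hc : Continuous F)
    (hF : ∀ x ∉ K, ∀ t, F (x, t) = 0) (t : ℝ) : Integrable (fun x => F (x, t)) μ := by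
  apply Continuous.integrable_of_hasCompactSupport (by fun_prop)
  exact HasCompactSupport.intro hK (fun x hx => hF x hx t)

lemma slice_continuous {K : Set E} (hK : IsCompact K) {F : E × ℝ → ℝ} (hc : Continuous F)
    (hF : ∀ x ∉ K, ∀ t, F (x, t) = 0) : Continuous (fun t => ∫ x, F (x, t) ∂μ) := by
  rw [← continuousOn_univ]
  refine continuousOn_integral_of_compact_support (f := fun t x => F (x, t)) hK ?_ ?_
  · apply Continuous.continuousOn
    simp only [Function.uncurry_def]
    fun_prop
  · intro p x _ hx
    exact hF x hx p

lemma slice_deriv {K : Set E} (hK : IsCompact K) {F : E × ℝ → ℝ} (hc : ContDiff ℝ (⊤ : ℕ∞) F)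
    (hF : ∀ x ∉ K, ∀ t, F (x, t) = 0) (t : ℝ) :
    HasDerivAt (fun t => ∫ x, F (x, t) ∂μ) (∫ x, dv ((0 : E), (1 : ℝ)) F (x, t) ∂μ) t := by
  have hd := (dv_smooth ((0 : E), (1 : ℝ)) hc).continuous
  have hd0 := dv_supp hK.isClosed ((0 : E), (1 : ℝ)) hF
  obtain ⟨C, hC⟩ := (hK.prod (isCompact_Icc (a := t - 1) (b := t + 1))).exists_bound_of_continuousOn
    hd.continuousOn
  refine (hasDerivAt_integral_of_dominated_loc_of_deriv_le (F := fun t x => F (x, t))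
    (F' := fun t x => dv ((0 : E), (1 : ℝ)) F (x, t)) (bound := K.indicator fun _ => C)
    (Icc_mem_nhds (a := t - 1) (b := t + 1) (by linarith) (by linarith))
    (Filter.Eventually.of_forall fun s =>
      (slice_integrable μ hK hc.continuous hF s).aestronglyMeasurable)
    (slice_integrable μ hK hc.continuous hF t)
    (slice_integrable μ hK hd hd0 t).aestronglyMeasurable
    (Filter.Eventually.of_forall fun x s hs => ?_) ?_
    (Filter.Eventually.of_forall fun x s _ => slice_t hc x s)).2
  · by_cases hx : x ∈ K
    · simpa [hx] using hC (x, s) ⟨hx, hs⟩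
    · simp [hx, hd0 x hx s]
  · rw [integrable_indicator_iff hK.measurableSet]
    exact integrableOn_const hK.measure_ne_top

lemma slice_div {K : Set E} (hK : IsCompact K) {F : E × ℝ → ℝ} (hc : ContDiff ℝ (⊤ : ℕ∞) F)
    (hF : ∀ x ∉ K, ∀ t, F (x, t) = 0) (v : E) (t : ℝ) :
    ∫ x, dv (v, (0 : ℝ)) F (x, t) ∂μ = 0 := by
  have hd := (dv_smooth (v, (0 : ℝ)) hc).continuous
  have hd0 := dv_supp hK.isClosed (v, (0 : ℝ)) hF
  have h := integral_mul_fderiv_eq_neg_fderiv_mul_of_integrable (μ := μ) (f := fun _ : E => (1 : ℝ))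
    (g := fun x => F (x, t)) (v := v) (by simp)
    (by simp only [one_mul, slice_x hc]; exact slice_integrable μ hK hd hd0 t)
    (by simp only [one_mul]; exact slice_integrable μ hK hc.continuous hF t)
    (fun _ _ => by fun_prop)
    (fun x _ => ((smooth_diff hc).comp (by fun_prop : Differentiable ℝ (fun y : E => (y, t)))) x)
  simpa [slice_x hc] using h

end slices

lemma grad_sq {n : ℕ} {F : EuclideanSpace ℝ (Fin n) × ℝ → ℝ} (hF : ContDiff ℝ (⊤ : ℕ∞) F)
    (x : EuclideanSpace ℝ (Fin n)) (t : ℝ) :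
    ‖gradient (fun y => F (y, t)) x‖ ^ 2
      = ∑ i, (dv (EuclideanSpace.single i (1 : ℝ), (0 : ℝ)) F (x, t)) ^ 2 := by
  rw [EuclideanSpace.real_norm_sq_eq]
  refine Finset.sum_congr rfl fun i _ => ?_
  rw [← slice_x hF]
  congr 1
  have : inner ℝ (gradient (fun y => F (y, t)) x) (EuclideanSpace.single i (1 : ℝ))
      = fderiv ℝ (fun y => F (y, t)) x (EuclideanSpace.single i (1 : ℝ)) := by
    rw [gradient, InnerProductSpace.toDual_symm_apply]
  rw [← this, EuclideanSpace.inner_single_right]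
  simp

lemma pointwise_bound {n : ℕ} (s A W P Pt Φt : ℝ) (Q R Φx : Fin n → ℝ) (hs : 1 ≤ s) (hW : 0 ≤ W)
    (hA : 0 ≤ A) (ht : |Φt| ≤ A) (hx : ∀ i, |Φx i| ≤ A) :
    W * (s * Φt * (P ^ 2 + ∑ i, Q i ^ 2) + P * (Pt - ∑ i, R i) - 2 * s * ∑ i, Φx i * Q i * P)
      ≤ (2 * A * (2 + n) + 1) * s * (1 / 2 * (W * (P ^ 2 + ∑ i, Q i ^ 2)))
        + 1 / (2 * s) * (W * (Pt - ∑ i, R i) ^ 2) := by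
  set S := ∑ i, Q i ^ 2 with hS
  set f := Pt - ∑ i, R i
  have hS0 : 0 ≤ S := Finset.sum_nonneg fun i _ => sq_nonneg _
  have h1 : Φt * (P ^ 2 + S) ≤ A * (P ^ 2 + S) :=
    mul_le_mul_of_nonneg_right ((le_abs_self _).trans ht) (by positivity)
  have h2 : -(2 * ∑ i, Φx i * Q i * P) ≤ A * (S + n * P ^ 2) := by
    have : ∑ i, -(2 * (Φx i * Q i * P)) ≤ ∑ i : Fin n, A * (Q i ^ 2 + P ^ 2) := by
      refine Finset.sum_le_sum fun i _ => ?_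
      obtain ⟨ha, hb⟩ := abs_le.1 (hx i)
      nlinarith [mul_nonneg (by linarith : 0 ≤ A + Φx i) (sq_nonneg (Q i - P)),
        mul_nonneg (by linarith : 0 ≤ A - Φx i) (sq_nonneg (Q i + P)),
        mul_nonneg (by linarith : 0 ≤ A + Φx i) (sq_nonneg (Q i + P)),
        mul_nonneg (by linarith : 0 ≤ A - Φx i) (sq_nonneg (Q i - P))]
    rw [← Finset.mul_sum, Finset.sum_add_distrib, Finset.sum_neg_distrib, ← Finset.mul_sum] at this
    simpa using this
  have h3 : P * f ≤ s * P ^ 2 / 2 + 1 / (2 * s) * f ^ 2 := by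
    have hs0 : 0 < s := by linarith
    have : s * P ^ 2 / 2 + 1 / (2 * s) * f ^ 2 - P * f = (s * P - f) ^ 2 / (2 * s) := by
      field_simp
      ring
    have h4 : 0 ≤ (s * P - f) ^ 2 / (2 * s) := by positivity
    linarith
  have h5 : s * Φt * (P ^ 2 + S) + P * f - 2 * s * ∑ i, Φx i * Q i * P
      ≤ (2 * A * (2 + n) + 1) * s * (1 / 2 * (P ^ 2 + S)) + 1 / (2 * s) * f ^ 2 := by
    have e1 := mul_le_mul_of_nonneg_left h1 (by linarith : 0 ≤ s)
    have e2 := mul_le_mul_of_nonneg_left h2 (by linarith : 0 ≤ s)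
    have hn : (0 : ℝ) ≤ n := Nat.cast_nonneg n
    have e3 : 0 ≤ s * A * n * S := by positivity
    have e4 : 0 ≤ s * S := by positivity
    have e5 : 0 ≤ s * A * P ^ 2 := by positivity
    linarith
  calc _ ≤ W * _ := mul_le_mul_of_nonneg_left h5 hW
    _ = _ := by ring

lemma final_average (E E' G : ℝ → ℝ) (τ T s C1 : ℝ) (hτ : 0 < τ) (hτT : τ < T) (hs : 1 ≤ s)
    (hC1 : 0 ≤ C1) (hE : ∀ t, HasDerivAt E (E' t) t) (hE' : Continuous E')
    (hG : Continuous G) (hE0 : ∀ t, 0 ≤ E t) (hG0 : ∀ t, 0 ≤ G t)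
    (hb : ∀ t ∈ Icc (-τ) τ, E' t ≤ C1 * s * E t + 1 / (2 * s) * G t) :
    E τ ≤ (1 / (2 * τ) + C1 + 1) * s * (∫ t in Ioo (-τ) τ, E t)
      + ((1 / (2 * τ) + C1 + 1) / s) * ∫ t in Ioo (-T) T, G t := by
  have hEc : Continuous E := continuous_iff_continuousAt.2 fun t => (hE t).continuousAt
  have hs0 : 0 < s := by linarith
  have hftc : ∫ t in (-τ)..τ, (1 / (2 * τ) * E t + (t + τ) / (2 * τ) * E' t) = E τ := by
    rw [intervalIntegral.integral_eq_sub_of_hasDerivAt (f := fun t => (t + τ) / (2 * τ) * E t)]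
    · field_simp
      ring
    · intro t _
      exact (((hasDerivAt_id t).add_const τ).div_const (2 * τ)).mul (hE t)
    · apply Continuous.intervalIntegrable
      fun_prop
  have hle : ∫ t in (-τ)..τ, (1 / (2 * τ) * E t + (t + τ) / (2 * τ) * E' t)
      ≤ ∫ t in (-τ)..τ, ((1 / (2 * τ) + C1 * s) * E t + 1 / (2 * s) * G t) := by
    apply intervalIntegral.integral_mono_on (by linarith)
    · apply Continuous.intervalIntegrable; fun_prop
    · apply Continuous.intervalIntegrable; fun_prop
    intro t ht
    have hc0 : 0 ≤ (t + τ) / (2 * τ) := div_nonneg (by linarith [ht.1]) (by linarith)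
    have hc1 : (t + τ) / (2 * τ) ≤ 1 := by rw [div_le_one (by linarith)]; linarith [ht.2]
    have hp : 0 ≤ C1 * s * E t + 1 / (2 * s) * G t := by
      have := hE0 t
      have := hG0 t
      positivity
    have := mul_le_mul_of_nonneg_left (hb t ht) hc0
    have := mul_le_mul_of_nonneg_right hc1 hp
    linarith
  rw [hftc, intervalIntegral.integral_add, intervalIntegral.integral_const_mul,
    intervalIntegral.integral_const_mul, intervalIntegral.integral_of_le (by linarith),
    intervalIntegral.integral_of_le (by linarith), integral_Ioc_eq_integral_Ioo,
    integral_Ioc_eq_integral_Ioo] at hle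
  rotate_left
  · apply Continuous.intervalIntegrable; fun_prop
  · apply Continuous.intervalIntegrable; fun_prop
  have hGm : ∫ t in Ioo (-τ) τ, G t ≤ ∫ t in Ioo (-T) T, G t := by
    apply setIntegral_mono_set
    · exact (hG.integrableOn_Icc (a := -T) (b := T)).mono_set Ioo_subset_Icc_self
    · exact Filter.Eventually.of_forall hG0
    · exact (Ioo_subset_Ioo (by linarith) (by linarith)).eventuallyLE
  have hI0 : 0 ≤ ∫ t in Ioo (-τ) τ, E t := integral_nonneg hE0
  have hJ0 : 0 ≤ ∫ t in Ioo (-T) T, G t := integral_nonneg hG0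
  have hi : 0 ≤ 1 / (2 * τ) := by positivity
  have k1 : (1 / (2 * τ) + C1 * s) ≤ (1 / (2 * τ) + C1 + 1) * s := by nlinarith
  have k2 : 1 / (2 * s) ≤ (1 / (2 * τ) + C1 + 1) / s := by
    rw [div_le_div_iff₀ (by positivity) hs0]
    nlinarith
  have k3 : 0 ≤ 1 / (2 * s) := by positivity
  calc E τ ≤ _ := hle
    _ ≤ _ := add_le_add (mul_le_mul_of_nonneg_right k1 hI0)
      ((mul_le_mul_of_nonneg_left hGm k3).trans (mul_le_mul_of_nonneg_right k2 hJ0))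

lemma phi_smooth {n : ℕ} (x₀ : EuclideanSpace ℝ (Fin n)) (β C₀ l : ℝ) :
    ContDiff ℝ (⊤ : ℕ∞)
      (fun q : EuclideanSpace ℝ (Fin n) × ℝ => phi x₀ β C₀ l q.1 q.2) := by
  unfold phi psi
  have h : ContDiff ℝ (⊤ : ℕ∞) (fun q : EuclideanSpace ℝ (Fin n) × ℝ => ‖q.1 - x₀‖ ^ 2) :=
    (contDiff_fst.sub contDiff_const).norm_sq ℝ
  fun_prop

/-- The energy inequality for a general smooth weight. -/
lemma core_bound {n : ℕ} {K : Set (EuclideanSpace ℝ (Fin n))} (hK : IsCompact K)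
    (Φ Z : EuclideanSpace ℝ (Fin n) × ℝ → ℝ)
    (hΦ : ContDiff ℝ (⊤ : ℕ∞) Φ) (hZ : ContDiff ℝ (⊤ : ℕ∞) Z)
    (hZ0 : ∀ x ∉ K, ∀ t, Z (x, t) = 0) (A s τ T : ℝ) (hA : 0 ≤ A) (hs : 1 ≤ s)
    (hτ : 0 < τ) (hτT : τ < T)
    (hb : ∀ x ∈ K, ∀ t ∈ Icc (-T) T, ‖fderiv ℝ Φ (x, t)‖ ≤ A) :
    let Q := fun i : Fin n => dv (EuclideanSpace.single i (1 : ℝ), (0 : ℝ)) Z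
    let P := dv ((0 : EuclideanSpace ℝ (Fin n)), (1 : ℝ)) Z
    let C1 := 2 * A * (2 + n) + 1
    let e := fun t : ℝ => (1 / 2 : ℝ) * ∫ x, Real.exp (2 * s * Φ (x, t)) *
      ((P (x, t)) ^ 2 + ∑ i, (Q i (x, t)) ^ 2)
    e τ ≤ (1 / (2 * τ) + C1 + 1) * s * (∫ t in Ioo (-τ) τ, e t)
      + ((1 / (2 * τ) + C1 + 1) / s) * ∫ t in Ioo (-T) T, ∫ x, Real.exp (2 * s * Φ (x, t)) *
        (dv ((0 : EuclideanSpace ℝ (Fin n)), (1 : ℝ)) P (x, t)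
          - ∑ i, dv (EuclideanSpace.single i (1 : ℝ), (0 : ℝ)) (Q i) (x, t)) ^ 2 := by
  intro Q P C1 e
  have hP : ContDiff ℝ (⊤ : ℕ∞) P := dv_smooth _ hZ
  have hQ : ∀ i, ContDiff ℝ (⊤ : ℕ∞) (Q i) := fun i => dv_smooth _ hZ
  have hP0 : ∀ x ∉ K, ∀ t, P (x, t) = 0 := dv_supp hK.isClosed _ hZ0
  have hQ0 : ∀ i, ∀ x ∉ K, ∀ t, Q i (x, t) = 0 := fun i => dv_supp hK.isClosed _ hZ0
  have hPt : ContDiff ℝ (⊤ : ℕ∞) (dv ((0 : EuclideanSpace ℝ (Fin n)), (1 : ℝ)) P) := dv_smooth _ hP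
  have hQx : ∀ i, ContDiff ℝ (⊤ : ℕ∞) (dv (EuclideanSpace.single i (1 : ℝ), (0 : ℝ)) (Q i)) :=
    fun i => dv_smooth _ (hQ i)
  have hPt0 : ∀ x ∉ K, ∀ t, dv ((0 : EuclideanSpace ℝ (Fin n)), (1 : ℝ)) P (x, t) = 0 :=
    dv_supp hK.isClosed _ hP0
  have hQx0 : ∀ i, ∀ x ∉ K, ∀ t,
      dv (EuclideanSpace.single i (1 : ℝ), (0 : ℝ)) (Q i) (x, t) = 0 :=
    fun i => dv_supp hK.isClosed _ (hQ0 i)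
  set W : EuclideanSpace ℝ (Fin n) × ℝ → ℝ := fun q => Real.exp (2 * s * Φ q) with hWdef
  have hW : ContDiff ℝ (⊤ : ℕ∞) W := by fun_prop
  -- energy density
  set D : EuclideanSpace ℝ (Fin n) × ℝ → ℝ :=
    fun q => W q * (P q * P q + ∑ i, Q i q * Q i q) with hD
  have hB : ContDiff ℝ (⊤ : ℕ∞) (fun q => P q * P q + ∑ i, Q i q * Q i q) :=
    (hP.mul hP).add (ContDiff.sum fun i _ => (hQ i).mul (hQ i))
  have hDs : ContDiff ℝ (⊤ : ℕ∞) D := hW.mul hB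
  have hD0 : ∀ x ∉ K, ∀ t, D (x, t) = 0 := by
    intro x hx t
    simp [D, hP0 x hx t, fun i => hQ0 i x hx t]
  set G : EuclideanSpace ℝ (Fin n) × ℝ → ℝ := fun q => W q *
        (dv ((0 : EuclideanSpace ℝ (Fin n)), (1 : ℝ)) P q
          - ∑ i, dv (EuclideanSpace.single i (1 : ℝ), (0 : ℝ)) (Q i) q) ^ 2 with hG
  have hGs : ContDiff ℝ (⊤ : ℕ∞) G :=
    hW.mul ((hPt.sub (ContDiff.sum fun i _ => hQx i)).pow 2)
  have hG0 : ∀ x ∉ K, ∀ t, G (x, t) = 0 := by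
    intro x hx t
    simp [G, hPt0 x hx t, fun i => hQx0 i x hx t]
  set H : Fin n → EuclideanSpace ℝ (Fin n) × ℝ → ℝ := fun i q => W q * (Q i q * P q) with hH
  have hHs : ∀ i, ContDiff ℝ (⊤ : ℕ∞) (H i) := fun i => hW.mul ((hQ i).mul hP)
  have hH0 : ∀ i, ∀ x ∉ K, ∀ t, H i (x, t) = 0 := by
    intro i x hx t
    simp [H, hP0 x hx t]
  have heD : ∀ t, e t = 1 / 2 * ∫ x, D (x, t) := by
    intro t
    simp only [e, D, W, sq]
  have hDt0 := dv_supp hK.isClosed ((0 : EuclideanSpace ℝ (Fin n)), (1 : ℝ)) hD0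
  have hDtc := (dv_smooth ((0 : EuclideanSpace ℝ (Fin n)), (1 : ℝ)) hDs).continuous
  have hder : ∀ t, HasDerivAt e
      (1 / 2 * ∫ x, dv ((0 : EuclideanSpace ℝ (Fin n)), (1 : ℝ)) D (x, t)) t := by
    intro t
    rw [funext heD]
    exact (slice_deriv volume hK hDs hD0 t).const_mul _
  refine final_average e _ (fun t => ∫ x, G (x, t)) τ T s C1 hτ hτT hs (by positivity) hder
    (continuous_const.mul (slice_continuous volume hK hDtc hDt0))
    (slice_continuous volume hK hGs.continuous hG0) ?_ ?_ ?_
  · intro t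
    exact mul_nonneg (by norm_num) (integral_nonneg fun x => by positivity)
  · intro t
    exact integral_nonneg fun x => by simp only [G, W]; positivity
  intro t ht
  have ht' : t ∈ Icc (-T) T := ⟨by linarith [ht.1], by linarith [ht.2]⟩
  have iDt : Integrable (fun x => dv ((0 : EuclideanSpace ℝ (Fin n)), (1 : ℝ)) D (x, t)) :=
    slice_integrable volume hK hDtc hDt0 t
  have iH : ∀ i, Integrable (fun x => dv (EuclideanSpace.single i (1 : ℝ), (0 : ℝ)) (H i) (x, t)) :=
    fun i => slice_integrable volume hK (dv_smooth _ (hHs i)).continuous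
      (dv_supp hK.isClosed _ (hH0 i)) t
  have iD : Integrable (fun x => D (x, t)) := slice_integrable volume hK hDs.continuous hD0 t
  have iG : Integrable (fun x => G (x, t)) := slice_integrable volume hK hGs.continuous hG0 t
  have hdiv : ∫ x, ∑ i, dv (EuclideanSpace.single i (1 : ℝ), (0 : ℝ)) (H i) (x, t) = 0 := by
    rw [integral_finsetSum _ fun i _ => iH i]
    exact Finset.sum_eq_zero fun i _ => slice_div volume hK (hHs i) (hH0 i) _ t
  have hlhs : 1 / 2 * ∫ x, dv ((0 : EuclideanSpace ℝ (Fin n)), (1 : ℝ)) D (x, t)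
      = ∫ x, (1 / 2 * dv ((0 : EuclideanSpace ℝ (Fin n)), (1 : ℝ)) D (x, t)
        - ∑ i, dv (EuclideanSpace.single i (1 : ℝ), (0 : ℝ)) (H i) (x, t)) := by
    rw [integral_sub (iDt.const_mul _) (integrable_finsetSum _ fun i _ => iH i), hdiv,
      integral_const_mul, sub_zero]
  have hrhs : C1 * s * e t + 1 / (2 * s) * ∫ x, G (x, t)
      = ∫ x, (C1 * s * (1 / 2 * D (x, t)) + 1 / (2 * s) * G (x, t)) := by
    rw [integral_add ((iD.const_mul _).const_mul _) (iG.const_mul _), integral_const_mul,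
      integral_const_mul, integral_const_mul, heD]
  rw [hlhs, hrhs]
  refine integral_mono ((iDt.const_mul _).sub (integrable_finsetSum _ fun i _ => iH i))
    (((iD.const_mul _).const_mul _).add (iG.const_mul _)) ?_
  intro x
  dsimp only
  by_cases hx : x ∈ K
  swap
  · rw [hDt0 x hx t, hD0 x hx t, hG0 x hx t]
    simp [fun i => dv_supp hK.isClosed (EuclideanSpace.single i (1 : ℝ), (0 : ℝ)) (hH0 i) x hx t]
  have hpw := pointwise_bound s A (W (x, t)) (P (x, t))
    (dv ((0 : EuclideanSpace ℝ (Fin n)), (1 : ℝ)) P (x, t))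
    (dv ((0 : EuclideanSpace ℝ (Fin n)), (1 : ℝ)) Φ (x, t))
    (fun i => Q i (x, t))
    (fun i => dv (EuclideanSpace.single i (1 : ℝ), (0 : ℝ)) (Q i) (x, t))
    (fun i => dv (EuclideanSpace.single i (1 : ℝ), (0 : ℝ)) Φ (x, t))
    hs (Real.exp_pos _).le hA ?_ ?_
  rotate_left
  · have := (fderiv ℝ Φ (x, t)).le_opNorm ((0 : EuclideanSpace ℝ (Fin n)), (1 : ℝ))
    refine le_trans this (le_trans ?_ (hb x hx t ht'))
    simp [Prod.norm_def]
  · intro i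
    have := (fderiv ℝ Φ (x, t)).le_opNorm (EuclideanSpace.single i (1 : ℝ), (0 : ℝ))
    refine le_trans this (le_trans ?_ (hb x hx t ht'))
    simp [Prod.norm_def]
  have eqD : D (x, t) = W (x, t) * (P (x, t) ^ 2 + ∑ i, Q i (x, t) ^ 2) := by
    simp only [D, sq]
  have eqDt : dv ((0 : EuclideanSpace ℝ (Fin n)), (1 : ℝ)) D (x, t)
      = 2 * (W (x, t) * (s * dv ((0 : EuclideanSpace ℝ (Fin n)), (1 : ℝ)) Φ (x, t)
          * (P (x, t) ^ 2 + ∑ i, Q i (x, t) ^ 2)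
        + P (x, t) * dv ((0 : EuclideanSpace ℝ (Fin n)), (1 : ℝ)) P (x, t)
        + ∑ i, Q i (x, t) * dv (EuclideanSpace.single i (1 : ℝ), (0 : ℝ)) P (x, t))) := by
    rw [hD, dv_mul _ hW hB, dv_add _ (hP.mul hP) (ContDiff.sum fun i _ => (hQ i).mul (hQ i)),
      dv_mul _ hP hP, dv_sum _ (fun i => (hQ i).mul (hQ i)), hWdef, dv_exp _ _ hΦ]
    have : ∀ i, dv ((0 : EuclideanSpace ℝ (Fin n)), (1 : ℝ)) (fun q => Q i q * Q i q) (x, t)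
        = 2 * (Q i (x, t) * dv (EuclideanSpace.single i (1 : ℝ), (0 : ℝ)) P (x, t)) := by
      intro i
      rw [dv_mul _ (hQ i) (hQ i), dv_comm _ _ hZ]
      ring
    simp only [this]
    simp only [← Finset.mul_sum, ← sq]
    ring
  have eqH : ∑ i, dv (EuclideanSpace.single i (1 : ℝ), (0 : ℝ)) (H i) (x, t)
      = W (x, t) * (2 * s * ∑ i, dv (EuclideanSpace.single i (1 : ℝ), (0 : ℝ)) Φ (x, t)
            * Q i (x, t) * P (x, t)
        + P (x, t) * ∑ i, dv (EuclideanSpace.single i (1 : ℝ), (0 : ℝ)) (Q i) (x, t)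
        + ∑ i, Q i (x, t) * dv (EuclideanSpace.single i (1 : ℝ), (0 : ℝ)) P (x, t)) := by
    simp only [Finset.mul_sum, ← Finset.sum_add_distrib]
    refine Finset.sum_congr rfl fun i _ => ?_
    simp only [H]
    rw [dv_mul _ hW ((hQ i).mul hP), dv_mul _ (hQ i) hP, hWdef, dv_exp _ _ hΦ]
    ring
  rw [eqDt, eqH, eqD]
  refine le_trans (le_of_eq ?_) hpw
  ring

/-- **Estimate (2.28)** (Step 1(b) of the proof of Theorem 2.5): there exist `M > 0` and
`s₀ > 0` such that for every `s ≥ s₀` and every smooth `z` vanishing (in space) outside a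
compact subset of `Ω`,
`E_s(T-η) ≤ Ms ∫_{-T+η}^{T-η} E_s(t)dt + (M/s) ∫_{-T}^T ∫_Ω e^{2sφ}|∂ₜ²z - Δz|²`. -/
theorem energy_at_interior_time_bound
    (n : ℕ) (hn : 1 ≤ n)
    (Ω : Set (EuclideanSpace ℝ (Fin n))) (hΩo : IsOpen Ω) (hΩb : Bornology.IsBounded Ω)
    (T : ℝ) (hT : 0 < T)
    (x₀ : EuclideanSpace ℝ (Fin n)) (hx₀ : x₀ ∉ closure Ω)
    (β : ℝ) (hβ : β ∈ Set.Ioo (0:ℝ) 1) (C₀ : ℝ) (hC₀ : 0 < C₀)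
    (hψ : ∀ x ∈ Ω, ∀ t ∈ Set.Ioo (-T) T, 1 ≤ psi x₀ β C₀ x t)
    (l : ℝ) (hl : 1 ≤ l)
    (η : ℝ) (hη : η ∈ Set.Ioo (0:ℝ) T) :
    ∃ M > (0:ℝ), ∃ s₀ > (0:ℝ), ∀ s ≥ s₀,
      ∀ z : EuclideanSpace ℝ (Fin n) → ℝ → ℝ,
        ContDiff ℝ (⊤ : ℕ∞) (fun q : EuclideanSpace ℝ (Fin n) × ℝ => z q.1 q.2) →
        (∃ K : Set (EuclideanSpace ℝ (Fin n)), IsCompact K ∧ K ⊆ Ω ∧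
          ∀ x ∉ K, ∀ t : ℝ, z x t = 0) →
        (1 / 2 : ℝ) * (∫ x in Ω, Real.exp (2 * s * phi x₀ β C₀ l x (T - η)) *
            ((deriv (z x) (T - η)) ^ 2 + ‖gradient (fun y => z y (T - η)) x‖ ^ 2))
          ≤ M * s * (∫ t in Set.Ioo (-T + η) (T - η),
                (1 / 2 : ℝ) * ∫ x in Ω, Real.exp (2 * s * phi x₀ β C₀ l x t) *
                  ((deriv (z x) t) ^ 2 + ‖gradient (fun y => z y t) x‖ ^ 2))
            + (M / s) * ∫ t in Set.Ioo (-T) T, ∫ x in Ω,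
                Real.exp (2 * s * phi x₀ β C₀ l x t) *
                  (deriv (deriv (z x)) t - lap (fun y => z y t) x) ^ 2 := by
  obtain ⟨hη0, hηT⟩ := hη
  have hcpt : IsCompact (closure Ω ×ˢ Icc (-T) T) := hΩb.isCompact_closure.prod isCompact_Icc
  have hΦ := phi_smooth x₀ β C₀ l
  obtain ⟨A, hA⟩ := hcpt.exists_bound_of_continuousOn
    (hΦ.continuous_fderiv (by simp)).continuousOn
  have hM : 0 < 1 / (2 * (T - η)) := by
    have : 0 < T - η := by linarith
    positivity
  refine ⟨1 / (2 * (T - η)) + (2 * |A| * (2 + n) + 1) + 1, by positivity, 1, one_pos, ?_⟩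
  rintro s hs z hz ⟨K, hK, hKΩ, hz0⟩
  have hZt := dv_smooth ((0 : EuclideanSpace ℝ (Fin n)), (1 : ℝ)) hz
  have key := core_bound hK (fun q => phi x₀ β C₀ l q.1 q.2) (fun q => z q.1 q.2) hΦ hz
    (fun x hx t => hz0 x hx t) |A| s (T - η) T (abs_nonneg A) hs (by linarith) (by linarith)
    (fun x hx t ht => (hA (x, t) ⟨subset_closure (hKΩ hx), ht⟩).trans (le_abs_self A))
  have hd : ∀ x t, deriv (z x) t
      = dv ((0 : EuclideanSpace ℝ (Fin n)), (1 : ℝ)) (fun q => z q.1 q.2) (x, t) :=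
    fun x t => (slice_t hz x t).deriv
  have hdd : ∀ x t, deriv (deriv (z x)) t
      = dv ((0 : EuclideanSpace ℝ (Fin n)), (1 : ℝ))
        (dv ((0 : EuclideanSpace ℝ (Fin n)), (1 : ℝ)) (fun q => z q.1 q.2)) (x, t) := by
    intro x t
    rw [funext (hd x)]
    exact (slice_t hZt x t).deriv
  have hg : ∀ x t, ‖gradient (fun y => z y t) x‖ ^ 2
      = ∑ i, (dv (EuclideanSpace.single i (1 : ℝ), (0 : ℝ)) (fun q => z q.1 q.2) (x, t)) ^ 2 :=
    fun x t => grad_sq hz x t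
  have hlap : ∀ x t, lap (fun y => z y t) x
      = ∑ i, dv (EuclideanSpace.single i (1 : ℝ), (0 : ℝ))
        (dv (EuclideanSpace.single i (1 : ℝ), (0 : ℝ)) (fun q => z q.1 q.2)) (x, t) := by
    intro x t
    unfold lap
    refine Finset.sum_congr rfl fun i _ => ?_
    rw [← slice_x (dv_smooth _ hz)]
    congr 2
    funext y
    exact slice_x hz y t _
  have hP0 : ∀ v, ∀ x ∉ K, ∀ t, dv v (fun q => z q.1 q.2) (x, t) = 0 :=
    fun v => dv_supp hK.isClosed v (fun x hx t => hz0 x hx t)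
  have hPP0 : ∀ v w, ∀ x ∉ K, ∀ t, dv v (dv w (fun q => z q.1 q.2)) (x, t) = 0 :=
    fun v w => dv_supp hK.isClosed v (hP0 w)
  have c1 : ∀ t, ∫ x in Ω, Real.exp (2 * s * phi x₀ β C₀ l x t) *
        ((deriv (z x) t) ^ 2 + ‖gradient (fun y => z y t) x‖ ^ 2)
      = ∫ x, Real.exp (2 * s * phi x₀ β C₀ l x t) *
        ((dv ((0 : EuclideanSpace ℝ (Fin n)), (1 : ℝ)) (fun q => z q.1 q.2) (x, t)) ^ 2
          + ∑ i, (dv (EuclideanSpace.single i (1 : ℝ), (0 : ℝ))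
            (fun q => z q.1 q.2) (x, t)) ^ 2) := by
    intro t
    simp only [hd, hg]
    apply setIntegral_eq_integral_of_forall_compl_eq_zero
    intro x hx
    have hx' : x ∉ K := fun h => hx (hKΩ h)
    simp [fun v => hP0 v x hx' t]
  have c2 : ∀ t, ∫ x in Ω, Real.exp (2 * s * phi x₀ β C₀ l x t) *
        (deriv (deriv (z x)) t - lap (fun y => z y t) x) ^ 2
      = ∫ x, Real.exp (2 * s * phi x₀ β C₀ l x t) *
        (dv ((0 : EuclideanSpace ℝ (Fin n)), (1 : ℝ))
          (dv ((0 : EuclideanSpace ℝ (Fin n)), (1 : ℝ)) (fun q => z q.1 q.2)) (x, t)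
          - ∑ i, dv (EuclideanSpace.single i (1 : ℝ), (0 : ℝ))
            (dv (EuclideanSpace.single i (1 : ℝ), (0 : ℝ)) (fun q => z q.1 q.2)) (x, t)) ^ 2 := by
    intro t
    simp only [hdd, hlap]
    apply setIntegral_eq_integral_of_forall_compl_eq_zero
    intro x hx
    have hx' : x ∉ K := fun h => hx (hKΩ h)
    simp [fun v w => hPP0 v w x hx' t]
  simp only [c1, c2]
  rw [show -T + η = -(T - η) by ring]
  exact key
end

section
/- Let n ≥ 1 be an integer, Ω ⊂ ℝⁿ a bounded open set, T > 0, x₀ ∈ ℝⁿ \ cl(Ω), and β ∈ (0,1) with sup_{x∈Ω}|x−x₀| < βT. Let C₀ > 0 be such that ψ ≥ 1 on Ω × (−T,T), where ψ(x,t) = |x−x₀|² − βt² + C₀. Then there exist λ > 0, s₀ > 0 and M > 0 such that, with φ = e^{λψ}, for every s ≥ s₀ and every smooth function z : ℝⁿ × ℝ → ℝ vanishing for x outside a compact subset of Ω (with no condition at t = ±T): s ∫_{−T}^{T} ∫_Ω e^{2sφ} (|∂ₜz|² + |∇z|²) dx dt + s³ ∫_{−T}^{T} ∫_Ω e^{2sφ}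 |z|² dx dt ≤ M ∫_{−T}^{T} ∫_Ω e^{2sφ} |∂ₜ²z − Δz|² dx dt. -/
open MeasureTheory Real Set
open scoped RealInnerProductSpace

/-! ### Directional calculus -/

/-- Directional derivative. -/
noncomputable def dd {X : Type*} [NormedAddCommGroup X] [NormedSpace ℝ X] (w : X) (f : X → ℝ) (q : X) : ℝ :=
  fderiv ℝ f q w

section abstractCalc
variable {X : Type*} [NormedAddCommGroup X] [NormedSpace ℝ X]

lemma dd_contDiff {f : X → ℝ} (hf : ContDiff ℝ (⊤ : ℕ∞) f) (w : X) :
    ContDiff ℝ (⊤ : ℕ∞) (dd w f) := by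
  unfold dd
  exact (hf.fderiv_right (m := (⊤ : ℕ∞)) (by simp)).clm_apply contDiff_const

lemma dd_line {f : X → ℝ} (hf : ContDiff ℝ (⊤ : ℕ∞) f) (w q : X) :
    HasDerivAt (fun t : ℝ => f (q + t • w)) (dd w f q) 0 := by
  have h1 : HasFDerivAt f (fderiv ℝ f q) (q + (0:ℝ) • w) := by
    simpa using (hf.differentiable (by simp) q).hasFDerivAt
  have h2 : HasDerivAt (fun t : ℝ => q + t • w) w 0 := by
    simpa using ((hasDerivAt_id (0:ℝ)).smul_const w).const_add q
  exact h1.comp_hasDerivAt (0:ℝ) h2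

lemma dd_of_line {f : X → ℝ} (hf : ContDiff ℝ (⊤ : ℕ∞) f) (w q : X) {c : ℝ}
    (h : HasDerivAt (fun t : ℝ => f (q + t • w)) c 0) : dd w f q = c :=
  (dd_line hf w q).unique h

lemma dd_comm {f : X → ℝ} (hf : ContDiff ℝ (⊤ : ℕ∞) f) (w u q : X) :
    dd w (dd u f) q = dd u (dd w f) q := by
  have hd : DifferentiableAt ℝ (fderiv ℝ f) q :=
    (hf.fderiv_right (m := (⊤ : ℕ∞)) (by simp)).differentiable (by simp) q
  have key : ∀ a b : X, dd a (dd b f) q = fderiv ℝ (fderiv ℝ f) q a b := by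
    intro a b
    unfold dd
    rw [fderiv_clm_apply hd (differentiableAt_const b)]
    simp
  rw [key, key]
  exact (hf.contDiffAt.isSymmSndFDerivAt (by simp; exact WithTop.coe_le_coe.mpr le_top)) w u

variable {ι : Type*} [Fintype ι] (e : ι → X) (ε : ι → ℝ)

/-- The bilinear form `∑ ε_a f_a g_a`. -/
noncomputable def QQ (f g : X → ℝ) (q : X) : ℝ := ∑ b, ε b * (dd (e b) f q * dd (e b) g q)

lemma QQ_contDiff {f g : X → ℝ} (hf : ContDiff ℝ (⊤ : ℕ∞) f) (hg : ContDiff ℝ (⊤ : ℕ∞) g) :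
    ContDiff ℝ (⊤ : ℕ∞) (QQ e ε f g) := by
  unfold QQ
  exact ContDiff.sum fun b _ => contDiff_const.mul ((dd_contDiff hf _).mul (dd_contDiff hg _))

/-- The flux. -/
noncomputable def flux (Φ σ v : X → ℝ) (a : ι) (q : X) : ℝ :=
  2 * (dd (e a) v q * QQ e ε Φ v q) - dd (e a) Φ q * QQ e ε v v q
    + QQ e ε Φ Φ q * (dd (e a) Φ q * v q ^ 2) + σ q * (v q * dd (e a) v q)

/-- The wave operator. -/
noncomputable def box (f : X → ℝ) (q : X) : ℝ := ∑ b, ε b * dd (e b) (dd (e b) f) q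

/-- The Hessian form. -/
noncomputable def HH (Φ : X → ℝ) (f : X → ℝ) (q : X) : ℝ :=
  ∑ a, ∑ b, ε a * ε b * (dd (e a) (dd (e b) Φ) q * (dd (e a) f q * dd (e b) f q))

lemma flux_contDiff {Φ σ v : X → ℝ} (hΦ : ContDiff ℝ (⊤ : ℕ∞) Φ) (hσ : ContDiff ℝ (⊤ : ℕ∞) σ)
    (hv : ContDiff ℝ (⊤ : ℕ∞) v) (a : ι) : ContDiff ℝ (⊤ : ℕ∞) (flux e ε Φ σ v a) := by
  unfold flux
  have h1 := QQ_contDiff e ε hΦ hv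
  have h2 := QQ_contDiff e ε hv hv
  have h3 := QQ_contDiff e ε hΦ hΦ
  have h4 := dd_contDiff hv (e a)
  have h5 := dd_contDiff hΦ (e a)
  fun_prop

lemma sum_algebra (v σ : ℝ) (p P τ : ι → ℝ) (h K : ι → ι → ℝ) (hh : ∀ a b, h a b = h b a) :
    ∑ a, ε a * (2 * (h a a * (∑ b, ε b * (P b * p b))
        + p a * (∑ b, ε b * (K a b * p b + P b * h a b)))
      - (K a a * (∑ b, ε b * (p b * p b)) + P a * (∑ b, ε b * (h a b * p b + p b * h a b)))
      + ((∑ b, ε b * (K a b * P b + P b * K a b)) * (P a * v ^ 2)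
        + (∑ b, ε b * (P b * P b)) * (K a a * v ^ 2 + P a * (2 * v * p a)))
      + (τ a * (v * p a) + σ * (p a * p a + v * h a a)))
    = ((∑ b, ε b * h b b) + (∑ b, ε b * (P b * P b)) * v)
        * (2 * (∑ b, ε b * (P b * p b)) + σ * v)
      + 2 * (∑ a, ∑ b, ε a * ε b * (K a b * (p a * p b)))
      - ((∑ b, ε b * K b b) - σ) * (∑ b, ε b * (p b * p b))
      + v ^ 2 * (2 * (∑ a, ∑ b, ε a * ε b * (K a b * (P a * P b)))
        + ((∑ b, ε b * K b b) - σ) * (∑ b, ε b * (P b * P b)))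
      + v * (∑ b, ε b * (τ b * p b)) := by
  set Qpp := ∑ b, ε b * (p b * p b) with hQpp
  set QPp := ∑ b, ε b * (P b * p b) with hQPp
  set QPP := ∑ b, ε b * (P b * P b) with hQPP
  have e1 : ∀ a, ∑ b, ε b * (K a b * p b + P b * h a b)
      = (∑ b, ε b * (K a b * p b)) + ∑ b, ε b * (P b * h a b) := by
    intro a; rw [← Finset.sum_add_distrib]; exact Finset.sum_congr rfl fun b _ => by ring
  have e2 : ∀ a, ∑ b, ε b * (h a b * p b + p b * h a b) = 2 * ∑ b, ε b * (h a b * p b) := by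
    intro a; rw [Finset.mul_sum]; exact Finset.sum_congr rfl fun b _ => by ring
  have e3 : ∀ a, ∑ b, ε b * (K a b * P b + P b * K a b) = 2 * ∑ b, ε b * (K a b * P b) := by
    intro a; rw [Finset.mul_sum]; exact Finset.sum_congr rfl fun b _ => by ring
  have s1 : ∑ a, ε a * (p a * ∑ b, ε b * (P b * h a b))
      = ∑ a, ε a * (P a * ∑ b, ε b * (h a b * p b)) := by
    simp_rw [Finset.mul_sum]
    rw [Finset.sum_comm]
    refine Finset.sum_congr rfl fun a _ => Finset.sum_congr rfl fun b _ => ?_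
    rw [hh b a]; ring
  have s2 : ∑ a, ε a * (p a * ∑ b, ε b * (K a b * p b))
      = ∑ a, ∑ b, ε a * ε b * (K a b * (p a * p b)) := by
    simp_rw [Finset.mul_sum]
    exact Finset.sum_congr rfl fun a _ => Finset.sum_congr rfl fun b _ => by ring
  have s3 : ∑ a, ε a * (P a * ∑ b, ε b * (K a b * P b))
      = ∑ a, ∑ b, ε a * ε b * (K a b * (P a * P b)) := by
    simp_rw [Finset.mul_sum]
    exact Finset.sum_congr rfl fun a _ => Finset.sum_congr rfl fun b _ => by ring
  have s4 : ∑ a, ε a * (2 * (h a a * QPp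
        + p a * (∑ b, ε b * (K a b * p b + P b * h a b)))
      - (K a a * Qpp + P a * (∑ b, ε b * (h a b * p b + p b * h a b)))
      + ((∑ b, ε b * (K a b * P b + P b * K a b)) * (P a * v ^ 2)
        + QPP * (K a a * v ^ 2 + P a * (2 * v * p a)))
      + (τ a * (v * p a) + σ * (p a * p a + v * h a a)))
      = 2 * QPp * (∑ a, ε a * h a a) + 2 * (∑ a, ε a * (p a * ∑ b, ε b * (K a b * p b)))
        + 2 * (∑ a, ε a * (p a * ∑ b, ε b * (P b * h a b)))
        - Qpp * (∑ a, ε a * K a a) - 2 * (∑ a, ε a * (P a * ∑ b, ε b * (h a b * p b)))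
        + 2 * v ^ 2 * (∑ a, ε a * (P a * ∑ b, ε b * (K a b * P b)))
        + QPP * v ^ 2 * (∑ a, ε a * K a a) + 2 * QPP * v * (∑ a, ε a * (P a * p a))
        + v * (∑ a, ε a * (τ a * p a)) + σ * (∑ a, ε a * (p a * p a))
        + σ * v * (∑ a, ε a * h a a) := by
    simp only [e1, e2, e3]
    conv_rhs => simp only [Finset.mul_sum (Finset.univ) _ (2 * QPp), Finset.mul_sum (Finset.univ) _ (2:ℝ), Finset.mul_sum (Finset.univ) _ Qpp, Finset.mul_sum (Finset.univ) _ (2 * v^2), Finset.mul_sum (Finset.univ) _ (QPP * v^2), Finset.mul_sum (Finset.univ) _ (2 * QPP * v), Finset.mul_sum (Finset.univ) _ v, Finset.mul_sum (Finset.univ) _ σ, Finset.mul_sum (Finset.univ) _ (σ * v), ← Finset.sum_add_distrib, ← Finset.sum_sub_distrib]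
    refine Finset.sum_congr rfl fun a _ => ?_
    ring
  rw [s4, s1, s2, s3, ← hQpp, ← hQPp]
  ring

lemma div_identity {Φ σ v : X → ℝ} (hΦ : ContDiff ℝ (⊤ : ℕ∞) Φ) (hσ : ContDiff ℝ (⊤ : ℕ∞) σ)
    (hv : ContDiff ℝ (⊤ : ℕ∞) v) (q : X) :
    ∑ a, ε a * dd (e a) (flux e ε Φ σ v a) q
      = (box e ε v q + QQ e ε Φ Φ q * v q) * (2 * QQ e ε Φ v q + σ q * v q)
        + 2 * HH e ε Φ v q - (box e ε Φ q - σ q) * QQ e ε v v q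
        + v q ^ 2 * (2 * HH e ε Φ Φ q + (box e ε Φ q - σ q) * QQ e ε Φ Φ q)
        + v q * QQ e ε σ v q := by
  have hQ : ∀ {f g : X → ℝ}, ContDiff ℝ (⊤ : ℕ∞) f → ContDiff ℝ (⊤ : ℕ∞) g → ∀ a,
      HasDerivAt (fun t : ℝ => QQ e ε f g (q + t • e a))
        (∑ b, ε b * (dd (e a) (dd (e b) f) q * dd (e b) g q
          + dd (e b) f q * dd (e a) (dd (e b) g) q)) 0 := by
    intro f g hf hg a
    unfold QQ
    refine HasDerivAt.fun_sum fun b _ => ?_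
    have := ((dd_line (dd_contDiff hf (e b)) (e a) q).fun_mul
      (dd_line (dd_contDiff hg (e b)) (e a) q)).const_mul (ε b)
    simpa using this
  have := sum_algebra ε (v q) (σ q) (fun a => dd (e a) v q) (fun a => dd (e a) Φ q)
    (fun a => dd (e a) σ q) (fun a b => dd (e a) (dd (e b) v) q)
    (fun a b => dd (e a) (dd (e b) Φ) q) (fun a b => dd_comm hv _ _ q)
  unfold box HH
  unfold QQ
  refine Eq.trans ?_ this
  refine Finset.sum_congr rfl fun a _ => ?_
  have h := ((((((dd_line (dd_contDiff hv (e a)) (e a) q).fun_mul (hQ hΦ hv a)).const_mul 2).fun_sub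
      ((dd_line (dd_contDiff hΦ (e a)) (e a) q).fun_mul (hQ hv hv a))).fun_add
      ((hQ hΦ hΦ a).fun_mul ((dd_line (dd_contDiff hΦ (e a)) (e a) q).fun_mul
        ((dd_line hv (e a) q).fun_pow 2)))).fun_add
      ((dd_line hσ (e a) q).fun_mul ((dd_line hv (e a) q).fun_mul
        (dd_line (dd_contDiff hv (e a)) (e a) q))))
  rw [dd_of_line (f := flux e ε Φ σ v a) (flux_contDiff e ε hΦ hσ hv a) (e a) q h]
  unfold QQ
  simp

/-- Conjugation by `exp Φ`. -/
lemma conj_first {Φ z : X → ℝ} (hΦ : ContDiff ℝ (⊤ : ℕ∞) Φ) (hz : ContDiff ℝ (⊤ : ℕ∞) z) (w q : X) :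
    dd w (fun q => Real.exp (Φ q) * z q) q = Real.exp (Φ q) * (dd w Φ q * z q + dd w z q) := by
  have h := ((dd_line hΦ w q).exp).fun_mul (dd_line hz w q)
  rw [dd_of_line (f := fun q => Real.exp (Φ q) * z q) (hΦ.exp.mul hz) w q h]
  simp; ring

lemma conj_second {Φ z : X → ℝ} (hΦ : ContDiff ℝ (⊤ : ℕ∞) Φ) (hz : ContDiff ℝ (⊤ : ℕ∞) z) (w q : X) :
    dd w (dd w (fun q => Real.exp (Φ q) * z q)) q
      = Real.exp (Φ q) * ((dd w Φ q ^ 2 + dd w (dd w Φ) q) * z q + 2 * dd w Φ q * dd w z q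
        + dd w (dd w z) q) := by
  have e : dd w (fun q => Real.exp (Φ q) * z q)
      = fun q => Real.exp (Φ q) * (dd w Φ q * z q + dd w z q) :=
    funext fun q => conj_first hΦ hz w q
  have h1 := dd_contDiff hΦ w
  have h2 := dd_contDiff hz w
  have h := ((dd_line hΦ w q).exp).fun_mul
    (((dd_line h1 w q).fun_mul (dd_line hz w q)).fun_add (dd_line h2 w q))
  rw [e, dd_of_line (f := fun q => Real.exp (Φ q) * (dd w Φ q * z q + dd w z q))
    (hΦ.exp.mul ((h1.mul hz).add h2)) w q h]
  simp; ring

lemma conj_box {Φ z : X → ℝ} (hΦ : ContDiff ℝ (⊤ : ℕ∞) Φ) (hz : ContDiff ℝ (⊤ : ℕ∞) z) (q : X)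
    {v : X → ℝ} (hv : v = fun q => Real.exp (Φ q) * z q) :
    box e ε v q - 2 * QQ e ε Φ v q + QQ e ε Φ Φ q * v q - box e ε Φ q * v q
      = Real.exp (Φ q) * box e ε z q := by
  subst hv
  unfold box QQ
  simp only [conj_second hΦ hz, conj_first hΦ hz]
  rw [Finset.mul_sum, Finset.mul_sum, Finset.sum_mul, Finset.sum_mul, ← Finset.sum_sub_distrib,
    ← Finset.sum_add_distrib, ← Finset.sum_sub_distrib]
  exact Finset.sum_congr rfl fun b _ => by ring

/-- The pointwise inequality before using the explicit weight. -/
lemma pointwise_abstract {Φ σ z : X → ℝ} (hΦ : ContDiff ℝ (⊤ : ℕ∞) Φ)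
    (hσ : ContDiff ℝ (⊤ : ℕ∞) σ) (hz : ContDiff ℝ (⊤ : ℕ∞) z) (q : X)
    {v : X → ℝ} (hv : v = fun q => Real.exp (Φ q) * z q) :
    2 * HH e ε Φ v q - (box e ε Φ q - σ q) * QQ e ε v v q
        + v q ^ 2 * (2 * HH e ε Φ Φ q + (box e ε Φ q - σ q) * QQ e ε Φ Φ q)
        + v q * QQ e ε σ v q - 1 / 2 * (box e ε Φ q - σ q) ^ 2 * v q ^ 2
      ≤ ∑ a, ε a * dd (e a) (flux e ε Φ σ v a) q
        + 1 / 2 * (Real.exp (Φ q) * box e ε z q) ^ 2 := by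
  have hvs : ContDiff ℝ (⊤ : ℕ∞) v := by rw [hv]; exact hΦ.exp.mul hz
  rw [div_identity e ε hΦ hσ hvs q, ← conj_box e ε hΦ hz q hv]
  generalize box e ε v q = b
  generalize QQ e ε Φ v q = y
  generalize QQ e ε Φ Φ q = w
  generalize box e ε Φ q = c
  generalize v q = u
  generalize σ q = g
  nlinarith [sq_nonneg (b - 2 * y + w * u - c * u + (2 * y + g * u)),
    sq_nonneg ((c - g) * u + (2 * y + g * u))]

end abstractCalc

/-! ### Space-time frame and integration -/

/-- Space-time frame. -/
noncomputable def eE (n : ℕ) : Option (Fin n) → EuclideanSpace ℝ (Fin n) × ℝ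
  | none => (0, 1)
  | some i => (EuclideanSpace.single i 1, 0)

/-- Signature. -/
noncomputable def epsE (n : ℕ) : Option (Fin n) → ℝ
  | none => 1
  | some _ => -1

lemma st_integrable {n : ℕ} {Ω K : Set (EuclideanSpace ℝ (Fin n))} (T : ℝ) (hΩ : MeasurableSet Ω)
    (hK : IsCompact K) {G : EuclideanSpace ℝ (Fin n) × ℝ → ℝ}
    (hG : Continuous G) (h0 : ∀ x ∉ K, ∀ t, G (x, t) = 0) :
    Integrable (fun p : ℝ × EuclideanSpace ℝ (Fin n) => G (p.2, p.1))
      ((volume.restrict (Ioo (-T) T)).prod (volume.restrict Ω)) := by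
  rw [Measure.prod_restrict]
  have h1 : IntegrableOn (fun p : ℝ × EuclideanSpace ℝ (Fin n) => G (p.2, p.1))
      (Icc (-T) T ×ˢ K) (volume.prod volume) :=
    (Continuous.continuousOn (by fun_prop)).integrableOn_compact (isCompact_Icc.prod hK)
  have h2 : IntegrableOn (fun p : ℝ × EuclideanSpace ℝ (Fin n) => G (p.2, p.1))
      (Icc (-T) T ×ˢ Ω) (volume.prod volume) := by
    refine IntegrableOn.of_forall_sdiff_eq_zero h1 (measurableSet_Icc.prod hΩ) ?_
    rintro ⟨t, x⟩ ⟨⟨ht, hx⟩, hn⟩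
    refine h0 x (fun hxK => hn ⟨ht, hxK⟩) t
  exact h2.mono_set (prod_mono Ioo_subset_Icc_self subset_rfl)

lemma st_integral {n : ℕ} {Ω K : Set (EuclideanSpace ℝ (Fin n))} (T : ℝ) (hΩ : MeasurableSet Ω)
    (hK : IsCompact K) {G : EuclideanSpace ℝ (Fin n) × ℝ → ℝ}
    (hG : Continuous G) (h0 : ∀ x ∉ K, ∀ t, G (x, t) = 0) :
    (∫ t in Ioo (-T) T, ∫ x in Ω, G (x, t)) =
      ∫ p, (fun p : ℝ × EuclideanSpace ℝ (Fin n) => G (p.2, p.1)) p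
      ∂((volume.restrict (Ioo (-T) T)).prod (volume.restrict Ω)) :=
  (integral_prod _ (st_integrable T hΩ hK hG h0)).symm

lemma dd_zero_off {n : ℕ} {K : Set (EuclideanSpace ℝ (Fin n))} (hK : IsCompact K)
    {G : EuclideanSpace ℝ (Fin n) × ℝ → ℝ} (h0 : ∀ x ∉ K, ∀ t, G (x, t) = 0)
    (w : EuclideanSpace ℝ (Fin n) × ℝ) : ∀ x ∉ K, ∀ t, dd w G (x, t) = 0 := by
  intro x hx t
  have : G =ᶠ[nhds (x, t)] fun _ => 0 := by
    have ho : IsOpen (Kᶜ ×ˢ (univ : Set ℝ)) := hK.isClosed.isOpen_compl.prod isOpen_univ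
    filter_upwards [ho.mem_nhds (⟨hx, mem_univ t⟩ : (x, t) ∈ Kᶜ ×ˢ (univ : Set ℝ))] with q hq
    exact h0 q.1 hq.1 q.2
  unfold dd
  rw [this.fderiv_eq]; simp

lemma dd_time {n : ℕ} {G : EuclideanSpace ℝ (Fin n) × ℝ → ℝ} (hG : ContDiff ℝ (⊤ : ℕ∞) G)
    (x : EuclideanSpace ℝ (Fin n)) (t : ℝ) :
    HasDerivAt (fun t => G (x, t)) (dd (eE n none) G (x, t)) t := by
  have h1 := (hG.differentiable (by simp) (x, t)).hasFDerivAt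
  have h2 : HasDerivAt (fun t : ℝ => (x, t)) ((0 : EuclideanSpace ℝ (Fin n)), (1:ℝ)) t :=
    (hasDerivAt_const t x).prodMk (hasDerivAt_id t)
  exact h1.comp_hasDerivAt t h2

lemma dd_space {n : ℕ} {G : EuclideanSpace ℝ (Fin n) × ℝ → ℝ} (hG : ContDiff ℝ (⊤ : ℕ∞) G)
    (x : EuclideanSpace ℝ (Fin n)) (t : ℝ) (i : Fin n) :
    fderiv ℝ (fun y => G (y, t)) x (EuclideanSpace.single i 1) = dd (eE n (some i)) G (x, t) := by
  have h1 := (hG.differentiable (by simp) (x, t)).hasFDerivAt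
  have h2 : HasFDerivAt (fun y : EuclideanSpace ℝ (Fin n) => (y, t))
    (ContinuousLinearMap.inl ℝ (EuclideanSpace ℝ (Fin n)) ℝ) x :=
    hasFDerivAt_prodMk_left x t
  have h3 : HasFDerivAt (fun y => G (y, t)) _ x := h1.comp x h2
  rw [h3.fderiv]
  simp [dd, eE]

lemma integral_space_zero {n : ℕ} {Ω K : Set (EuclideanSpace ℝ (Fin n))}
    (hK : IsCompact K) (hKΩ : K ⊆ Ω) {G : EuclideanSpace ℝ (Fin n) × ℝ → ℝ}
    (hG : ContDiff ℝ (⊤ : ℕ∞) G) (h0 : ∀ x ∉ K, ∀ t, G (x, t) = 0) (i : Fin n) (t : ℝ) :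
    ∫ x in Ω, dd (eE n (some i)) G (x, t) = 0 := by
  have hz := dd_zero_off hK h0 (eE n (some i))
  rw [setIntegral_eq_integral_of_forall_compl_eq_zero (fun x hx => hz x (fun h => hx (hKΩ h)) t)]
  have hc : HasCompactSupport (fun y => G (y, t)) :=
    HasCompactSupport.intro hK (fun x hx => h0 x hx t)
  have hs : ContDiff ℝ (⊤ : ℕ∞) (fun y : EuclideanSpace ℝ (Fin n) => G (y, t)) := by fun_prop
  have hc' : HasCompactSupport (fun y => dd (eE n (some i)) G (y, t)) :=
    HasCompactSupport.intro hK (fun x hx => hz x hx t)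
  have hs' : Continuous (fun y : EuclideanSpace ℝ (Fin n) => dd (eE n (some i)) G (y, t)) :=
    (dd_contDiff hG _).continuous.comp (by fun_prop)
  have := integral_mul_fderiv_eq_neg_fderiv_mul_of_integrable (𝕜 := ℝ)
    (μ := (volume : Measure (EuclideanSpace ℝ (Fin n)))) (f := fun _ => (1:ℝ))
    (g := fun y => G (y, t)) (v := EuclideanSpace.single i 1)
    (by simp) (by simp_rw [dd_space hG]; simpa using hs'.integrable_of_hasCompactSupport hc')
    (by simpa using hs.continuous.integrable_of_hasCompactSupport hc)
    (fun x _ => by fun_prop) (fun x _ => hs.differentiable (by simp) x)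
  simp_rw [dd_space hG] at this
  simpa using this

lemma integral_time {n : ℕ} {Ω K : Set (EuclideanSpace ℝ (Fin n))} {T : ℝ} (hT : 0 < T)
    (hΩ : MeasurableSet Ω)
    (hK : IsCompact K) {G : EuclideanSpace ℝ (Fin n) × ℝ → ℝ}
    (hG : ContDiff ℝ (⊤ : ℕ∞) G) (h0 : ∀ x ∉ K, ∀ t, G (x, t) = 0) :
    (∫ t in Ioo (-T) T, ∫ x in Ω, dd (eE n none) G (x, t))
      = ∫ x in Ω, (G (x, T) - G (x, -T)) := by
  have hz := dd_zero_off hK h0 (eE n none)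
  have hc : Continuous (dd (eE n none) G) := (dd_contDiff hG _).continuous
  rw [integral_integral_swap (st_integrable T hΩ hK hc hz)]
  congr 1
  ext x
  rw [← integral_Ioc_eq_integral_Ioo, ← intervalIntegral.integral_of_le (by linarith)]
  refine intervalIntegral.integral_eq_sub_of_hasDerivAt (fun t _ => dd_time hG x t) ?_
  exact (hc.comp (by fun_prop : Continuous fun t : ℝ => (x, t))).intervalIntegrable _ _

lemma integral_div {n : ℕ} {Ω K : Set (EuclideanSpace ℝ (Fin n))} {T : ℝ} (hT : 0 < T)
    (hΩ : MeasurableSet Ω)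
    (hK : IsCompact K) (hKΩ : K ⊆ Ω) {F : Option (Fin n) → EuclideanSpace ℝ (Fin n) × ℝ → ℝ}
    (hF : ∀ a, ContDiff ℝ (⊤ : ℕ∞) (F a)) (h0 : ∀ a, ∀ x ∉ K, ∀ t, F a (x, t) = 0)
    (hsign : ∀ x ∈ Ω, F none (x, T) ≤ 0 ∧ 0 ≤ F none (x, -T)) :
    (∫ p, (fun p : ℝ × EuclideanSpace ℝ (Fin n) =>
        ∑ a, epsE n a * dd (eE n a) (F a) (p.2, p.1)) p
      ∂((volume.restrict (Ioo (-T) T)).prod (volume.restrict Ω))) ≤ 0 := by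
  have hc : ∀ a, Continuous (dd (eE n a) (F a)) := fun a => (dd_contDiff (hF a) _).continuous
  have hz := fun a => dd_zero_off hK (h0 a) (eE n a)
  rw [integral_finsetSum _ (fun a _ => (st_integrable T hΩ hK (hc a) (hz a)).const_mul _)]
  simp_rw [integral_const_mul]
  rw [Fintype.sum_option]
  have h1 : ∀ a, ∫ p : ℝ × EuclideanSpace ℝ (Fin n), dd (eE n a) (F a) (p.2, p.1)
      ∂((volume.restrict (Ioo (-T) T)).prod (volume.restrict Ω))
      = ∫ t in Ioo (-T) T, ∫ x in Ω, dd (eE n a) (F a) (x, t) := fun a =>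
    (st_integral T hΩ hK (hc a) (hz a)).symm
  simp_rw [h1]
  rw [integral_time hT hΩ hK (hF none) (h0 none)]
  simp_rw [integral_space_zero hK hKΩ (hF (some _)) (h0 (some _))]
  simp only [epsE, integral_zero, mul_zero, Finset.sum_const_zero, add_zero, one_mul]
  refine setIntegral_nonpos hΩ fun x hx => ?_
  have := hsign x hx
  linarith [this.1, this.2]

/-! ### The explicit weight -/

section weight

lemma hda_conv {f g : ℝ → ℝ} {c d : ℝ} (h : HasDerivAt f c 0) (hf : ∀ t, g t = f t) (hc : d = c) :
    HasDerivAt g d 0 := by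
  rw [hc, funext hf]; exact h

variable {n : ℕ} (x₀ : EuclideanSpace ℝ (Fin n)) (β C₀ l s : ℝ)

/-- `ψ` on space-time. -/
noncomputable def Psi (q : EuclideanSpace ℝ (Fin n) × ℝ) : ℝ := psi x₀ β C₀ q.1 q.2

lemma Psi_contDiff : ContDiff ℝ (⊤ : ℕ∞) (Psi x₀ β C₀) := by
  unfold Psi psi
  have : ContDiff ℝ (⊤ : ℕ∞) (fun q : EuclideanSpace ℝ (Fin n) × ℝ => ‖q.1 - x₀‖ ^ 2) :=
    (contDiff_fst.sub contDiff_const).norm_sq ℝ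
  fun_prop

/-- Second derivatives of `ψ`. -/
noncomputable def mm (n : ℕ) (β : ℝ) : Option (Fin n) → ℝ
  | none => -2 * β
  | some _ => 2

/-- First derivatives of `ψ`. -/
noncomputable def dP : Option (Fin n) → EuclideanSpace ℝ (Fin n) × ℝ → ℝ
  | none => fun q => -2 * β * q.2
  | some i => fun q => 2 * (q.1 i - x₀ i)

lemma dd_Psi (a : Option (Fin n)) : dd (eE n a) (Psi x₀ β C₀) = dP x₀ β a := by
  funext q
  refine dd_of_line (Psi_contDiff x₀ β C₀) _ _ ?_
  have hid : HasDerivAt (fun t : ℝ => t) 1 0 := hasDerivAt_id 0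
  cases a with
  | none =>
    have h := ((((hid.const_add q.2).fun_pow 2).const_mul β).const_sub (‖q.1 - x₀‖ ^ 2)).add_const C₀
    simp only [Psi, psi, eE, dP]
    refine hda_conv h (fun t => ?_) ?_
    · simp
    · simp; ring
  | some i =>
    have h2 : HasDerivAt (fun t : ℝ => ∑ j, (q.1 j + t * (EuclideanSpace.single i (1:ℝ) : EuclideanSpace ℝ (Fin n)) j - x₀ j) ^ 2)
      (∑ j, 2 * (q.1 j - x₀ j) * (EuclideanSpace.single i (1:ℝ) : EuclideanSpace ℝ (Fin n)) j) 0 := by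
      refine HasDerivAt.fun_sum fun j _ => ?_
      have := (((hid.mul_const ((EuclideanSpace.single i (1:ℝ) : EuclideanSpace ℝ (Fin n)) j)).const_add (q.1 j)).sub_const (x₀ j)).fun_pow 2
      refine hda_conv this (fun t => rfl) ?_
      simp
    have h := (h2.sub_const (β * q.2 ^ 2)).add_const C₀
    simp only [Psi, psi, eE, dP]
    refine hda_conv h (fun t => ?_) ?_
    · rw [EuclideanSpace.real_norm_sq_eq]
      simp
    · simp

lemma dd_dP (a b : Option (Fin n)) (q) :
    dd (eE n a) (dP x₀ β b) q = if a = b then mm n β a else 0 := by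
  have hs : ContDiff ℝ (⊤ : ℕ∞) (dP x₀ β b) := by
    rw [← dd_Psi x₀ β 0 b]; exact dd_contDiff (Psi_contDiff _ _ _) _
  refine dd_of_line hs _ _ ?_
  have hid : HasDerivAt (fun t : ℝ => t) 1 0 := hasDerivAt_id 0
  cases a with
  | none =>
    cases b with
    | none =>
      simp only [dP, eE, mm]
      have := (hid.const_add q.2).const_mul (-2 * β)
      refine hda_conv this (fun t => ?_) ?_
      · simp
      · simp
    | some j => simpa [dP, eE, mm] using hasDerivAt_const (0:ℝ) (2 * (q.1 j - x₀ j))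
  | some i =>
    cases b with
    | none => simpa [dP, eE, mm] using hasDerivAt_const (0:ℝ) (-2 * β * q.2)
    | some j =>
      simp only [dP, eE, mm]
      have := (((hid.mul_const ((EuclideanSpace.single i (1:ℝ) : EuclideanSpace ℝ (Fin n)) j)).const_add (q.1 j)).sub_const (x₀ j)).const_mul 2
      refine hda_conv this (fun t => by simp) ?_
      by_cases h : i = j
      · subst h; simp
      · simp [h, Ne.symm h]

/-- `l φ` on space-time. -/
noncomputable def kk (q : EuclideanSpace ℝ (Fin n) × ℝ) : ℝ := l * Real.exp (l * Psi x₀ β C₀ q)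

/-- `s φ` on space-time. -/
noncomputable def Phi (q : EuclideanSpace ℝ (Fin n) × ℝ) : ℝ := s * Real.exp (l * Psi x₀ β C₀ q)

lemma Phi_contDiff : ContDiff ℝ (⊤ : ℕ∞) (Phi x₀ β C₀ l s) := by
  have := Psi_contDiff x₀ β C₀
  unfold Phi
  fun_prop

lemma kk_contDiff : ContDiff ℝ (⊤ : ℕ∞) (kk x₀ β C₀ l) := by
  have := Psi_contDiff x₀ β C₀
  unfold kk
  fun_prop

lemma dd_Phi (a : Option (Fin n)) :
    dd (eE n a) (Phi x₀ β C₀ l s) = fun q => s * kk x₀ β C₀ l q * dP x₀ β a q := by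
  funext q
  refine dd_of_line (Phi_contDiff x₀ β C₀ l s) _ _ ?_
  have h := ((dd_line (Psi_contDiff x₀ β C₀) (eE n a) q).const_mul l).exp.const_mul s
  unfold Phi kk
  refine hda_conv h (fun t => rfl) ?_
  rw [dd_Psi]
  simp; ring

lemma dd_dd_Phi (a b : Option (Fin n)) (q) :
    dd (eE n a) (dd (eE n b) (Phi x₀ β C₀ l s)) q
      = s * kk x₀ β C₀ l q * ((if a = b then mm n β a else 0) + l * (dP x₀ β a q * dP x₀ β b q)) := by
  refine dd_of_line (dd_contDiff (Phi_contDiff x₀ β C₀ l s) _) _ _ ?_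
  rw [dd_Phi, ← dd_dP x₀ β a b q]
  have hs : ContDiff ℝ (⊤ : ℕ∞) (dP x₀ β b) := by
    rw [← dd_Psi x₀ β 0 b]; exact dd_contDiff (Psi_contDiff _ _ _) _
  have h := ((((dd_line (Psi_contDiff x₀ β C₀) (eE n a) q).const_mul l).exp.const_mul l).const_mul s).fun_mul
    (dd_line hs (eE n a) q)
  unfold kk
  refine hda_conv h (fun t => rfl) ?_
  rw [dd_Psi]
  simp; ring

/-- Sum of squares of the spatial derivatives. -/
noncomputable def SS (f : EuclideanSpace ℝ (Fin n) × ℝ → ℝ) (q : EuclideanSpace ℝ (Fin n) × ℝ) : ℝ :=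
  ∑ i, dd (eE n (some i)) f q ^ 2

/-- `∑ ψ_i²`. -/
noncomputable def AA (q : EuclideanSpace ℝ (Fin n) × ℝ) : ℝ := ∑ i, dP x₀ β (some i) q ^ 2

lemma AA_eq (q) : AA x₀ β q = 4 * ‖q.1 - x₀‖ ^ 2 := by
  unfold AA
  rw [EuclideanSpace.real_norm_sq_eq, Finset.mul_sum]
  refine Finset.sum_congr rfl fun i _ => ?_
  simp [dP]; ring

/-- `∑ ε ψ_a f_a`. -/
noncomputable def QP (f : EuclideanSpace ℝ (Fin n) × ℝ → ℝ) (q : EuclideanSpace ℝ (Fin n) × ℝ) : ℝ :=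
  ∑ b, epsE n b * (dP x₀ β b q * dd (eE n b) f q)

lemma QP_eq (f) (q) : QP x₀ β f q = dP x₀ β none q * dd (eE n none) f q
    - ∑ i, dP x₀ β (some i) q * dd (eE n (some i)) f q := by
  unfold QP
  rw [Fintype.sum_option]
  simp [epsE]; ring

lemma QQ_self (f) (q) : QQ (eE n) (epsE n) f f q = dd (eE n none) f q ^ 2 - SS f q := by
  unfold QQ SS
  rw [Fintype.sum_option]
  simp [epsE, pow_two]; ring

lemma QQ_Phi (f) (q) : QQ (eE n) (epsE n) (Phi x₀ β C₀ l s) f q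
    = s * kk x₀ β C₀ l q * QP x₀ β f q := by
  unfold QQ QP
  rw [Finset.mul_sum]
  refine Finset.sum_congr rfl fun b _ => ?_
  rw [dd_Phi]; ring

lemma SS_Phi (q) : SS (Phi x₀ β C₀ l s) q = (s * kk x₀ β C₀ l q) ^ 2 * AA x₀ β q := by
  unfold SS AA
  rw [Finset.mul_sum]
  refine Finset.sum_congr rfl fun b _ => ?_
  rw [dd_Phi]; ring

lemma QP_Phi (q) : QP x₀ β (Phi x₀ β C₀ l s) q
    = s * kk x₀ β C₀ l q * (dP x₀ β none q ^ 2 - AA x₀ β q) := by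
  rw [QP_eq]
  simp only [dd_Phi, AA]
  rw [mul_sub, Finset.mul_sum]
  congr 1
  · ring
  · exact Finset.sum_congr rfl fun b _ => by ring

lemma QQ_Phi_Phi (q) : QQ (eE n) (epsE n) (Phi x₀ β C₀ l s) (Phi x₀ β C₀ l s) q
    = (s * kk x₀ β C₀ l q) ^ 2 * (dP x₀ β none q ^ 2 - AA x₀ β q) := by
  rw [QQ_Phi, QP_Phi]; ring

lemma HH_Phi (f) (q) : HH (eE n) (epsE n) (Phi x₀ β C₀ l s) f q
    = s * kk x₀ β C₀ l q * (-2 * β * dd (eE n none) f q ^ 2 + 2 * SS f q + l * QP x₀ β f q ^ 2) := by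
  unfold HH
  have h1 : ∀ a b, epsE n a * epsE n b * (dd (eE n a) (dd (eE n b) (Phi x₀ β C₀ l s)) q
      * (dd (eE n a) f q * dd (eE n b) f q))
      = s * kk x₀ β C₀ l q * ((if a = b then mm n β a * (epsE n a * epsE n b) *
          (dd (eE n a) f q * dd (eE n b) f q) else 0)
        + l * ((epsE n a * (dP x₀ β a q * dd (eE n a) f q)) *
            (epsE n b * (dP x₀ β b q * dd (eE n b) f q)))) := by
    intro a b
    rw [dd_dd_Phi]
    split_ifs <;> ring
  simp_rw [h1]
  simp_rw [← Finset.mul_sum, Finset.sum_add_distrib, ← Finset.mul_sum, ← Finset.sum_mul]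
  congr 1
  congr 1
  · simp only [Finset.sum_ite_eq, Finset.mem_univ, if_true]
    rw [Fintype.sum_option]
    simp only [mm, epsE, SS, Finset.mul_sum]
    congr 1
    · ring
    · exact Finset.sum_congr rfl fun i _ => by ring
  · unfold QP; ring

lemma box_Phi (q) : box (eE n) (epsE n) (Phi x₀ β C₀ l s) q
    = s * kk x₀ β C₀ l q * (-2 * β - 2 * n + l * (dP x₀ β none q ^ 2 - AA x₀ β q)) := by
  unfold box
  simp_rw [dd_dd_Phi]
  rw [Fintype.sum_option]
  simp only [if_true, mm, epsE, AA]
  have : ∑ i, -1 * (s * kk x₀ β C₀ l q * (2 + l * (dP x₀ β (some i) q * dP x₀ β (some i) q)))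
      = - (s * kk x₀ β C₀ l q) * (2 * n + l * ∑ i, dP x₀ β (some i) q ^ 2) := by
    rw [Finset.mul_sum]
    have : (2 * (n:ℝ)) = ∑ i : Fin n, (2:ℝ) := by simp; ring
    rw [this, ← Finset.sum_add_distrib, Finset.mul_sum]
    exact Finset.sum_congr rfl fun i _ => by ring
  rw [this]
  ring

/-- The zero-order multiplier, divided by `s`. -/
noncomputable def sig (q : EuclideanSpace ℝ (Fin n) × ℝ) : ℝ :=
  kk x₀ β C₀ l q * (2 - 2 * n + l * (dP x₀ β none q ^ 2 - AA x₀ β q))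

lemma dP_contDiff (b : Option (Fin n)) : ContDiff ℝ (⊤ : ℕ∞) (dP x₀ β b) := by
  rw [← dd_Psi x₀ β 0 b]; exact dd_contDiff (Psi_contDiff _ _ _) _

lemma AA_contDiff : ContDiff ℝ (⊤ : ℕ∞) (AA x₀ β) := by
  unfold AA
  exact ContDiff.sum fun i _ => (dP_contDiff x₀ β (some i)).pow 2

lemma sig_contDiff : ContDiff ℝ (⊤ : ℕ∞) (sig x₀ β C₀ l) := by
  have h1 := kk_contDiff x₀ β C₀ l
  have h2 := dP_contDiff x₀ β none
  have h3 := AA_contDiff x₀ β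
  unfold sig
  fun_prop

lemma dd_const_mul {f : EuclideanSpace ℝ (Fin n) × ℝ → ℝ} (hf : ContDiff ℝ (⊤ : ℕ∞) f) (c : ℝ) (w q) :
    dd w (fun q => c * f q) q = c * dd w f q := 
  dd_of_line (f := fun q => c * f q) (contDiff_const.mul hf) w q ((dd_line hf w q).const_mul c)

/-- `∑ σ_a²`. -/
noncomputable def NN (q : EuclideanSpace ℝ (Fin n) × ℝ) : ℝ :=
  ∑ a, dd (eE n a) (sig x₀ β C₀ l) q ^ 2

lemma NN_continuous : Continuous (NN x₀ β C₀ l) := by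
  unfold NN
  exact continuous_finsetSum _ fun a _ => ((dd_contDiff (sig_contDiff x₀ β C₀ l) _).continuous).pow 2

lemma QQ_sig_lower {f : EuclideanSpace ℝ (Fin n) × ℝ → ℝ} (q) {δ : ℝ} (hδ : 0 < δ) (v : ℝ) :
    -(s * (δ * (dd (eE n none) f q ^ 2 + SS f q) + NN x₀ β C₀ l q * v ^ 2 / (4 * δ))) ≤
      v * QQ (eE n) (epsE n) (fun q => s * sig x₀ β C₀ l q) f q ∨ s < 0 := by
  by_cases hs : s < 0
  · right; exact hs
  left
  push Not at hs
  have h1 : v * QQ (eE n) (epsE n) (fun q => s * sig x₀ β C₀ l q) f q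
      = s * ∑ a, epsE n a * (v * dd (eE n a) (sig x₀ β C₀ l) q * dd (eE n a) f q) := by
    unfold QQ
    rw [Finset.mul_sum, Finset.mul_sum]
    refine Finset.sum_congr rfl fun a _ => ?_
    rw [dd_const_mul (sig_contDiff x₀ β C₀ l)]; ring
  have h2 : δ * (dd (eE n none) f q ^ 2 + SS f q) + NN x₀ β C₀ l q * v ^ 2 / (4 * δ)
      = ∑ a, (δ * dd (eE n a) f q ^ 2 + dd (eE n a) (sig x₀ β C₀ l) q ^ 2 * v ^ 2 / (4 * δ)) := by
    rw [Finset.sum_add_distrib, ← Finset.mul_sum, ← Finset.sum_div, ← Finset.sum_mul]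
    unfold NN SS
    rw [Fintype.sum_option (fun a => dd (eE n a) f q ^ 2)]
  rw [h1, h2, ← mul_neg, ← Finset.sum_neg_distrib]
  refine mul_le_mul_of_nonneg_left (Finset.sum_le_sum fun a _ => ?_) hs
  have key : ∀ p r : ℝ, p * r ≤ δ * r ^ 2 + p ^ 2 / (4 * δ) := by
    intro p r
    have : δ * r ^ 2 + p ^ 2 / (4 * δ) - p * r = (2 * δ * r - p) ^ 2 / (4 * δ) := by
      field_simp; ring
    have h3 : 0 ≤ (2 * δ * r - p) ^ 2 / (4 * δ) := by positivity
    linarith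
  have k1 := key (v * dd (eE n a) (sig x₀ β C₀ l) q) (dd (eE n a) f q)
  have k2 := key (-(v * dd (eE n a) (sig x₀ β C₀ l) q)) (dd (eE n a) f q)
  cases a with
  | none => simp only [epsE]; ring_nf at k2 ⊢; linarith
  | some i => simp only [epsE]; ring_nf at k1 ⊢; linarith

end weight

/-! ### Pointwise estimates -/

section estimates
variable {n : ℕ} (x₀ : EuclideanSpace ℝ (Fin n)) (β C₀ l s : ℝ)

lemma bulk_numeric {β l s k k1 k2 a N A B v vt S Q V : ℝ} (hβ0 : 0 < β) (hβ1 : β < 1) (hl : 0 < l)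
    (hs : 1 ≤ s) (hk1 : 0 < k1) (hk : k1 ≤ k) (hk2 : k ≤ k2) (ha : 0 < a) (hA : a ≤ A)
    (hla : 4 ≤ l * ((1 - β) * a)) (hS : 0 ≤ S)
    (hs0 : 2 * (1 + β) ^ 2 * k2 ^ 2 + N / (4 * (k1 * (1 - β))) ≤ s * (k1 ^ 3 * ((1 - β) * a)))
    (hN : 0 ≤ N)
    (hV : -(s * (k1 * (1 - β) * (vt ^ 2 + S) + N * v ^ 2 / (4 * (k1 * (1 - β))))) ≤ V) :
    s * (k1 * (1 - β)) * (vt ^ 2 + S) + s ^ 3 * (k1 ^ 3 * ((1 - β) * a)) * v ^ 2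
    ≤ 2 * (s * k * (-2 * β * vt ^ 2 + 2 * S + l * Q ^ 2)) - (-2 * (1 + β) * (s * k)) * (vt ^ 2 - S)
      + v ^ 2 * (2 * (s * k * (-2 * β * ((s * k) ^ 2 * B) + 2 * ((s * k) ^ 2 * A)
          + l * (s * k * (B - A)) ^ 2)) + (-2 * (1 + β) * (s * k)) * ((s * k) ^ 2 * (B - A)))
      + V - 1 / 2 * (-2 * (1 + β) * (s * k)) ^ 2 * v ^ 2 := by
  have hs' : 0 < s := by linarith
  have hkp : 0 < k := by linarith
  have h1β : 0 < 1 - β := by linarith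
  have hE : 0 ≤ vt ^ 2 + S := by positivity
  -- bracket
  have hbr : 2 * ((1 - β) * a) ≤ 4 * (1 - β) * A + (2 + 6 * β) * (A - B) + 2 * l * (A - B) ^ 2 := by
    have h1 : 4 * ((1 - β) * a) ≤ 4 * (1 - β) * A := by nlinarith
    have h2 : 0 ≤ l * (2 * ((1 - β) * a) + (2 + 6 * β) * (A - B) + 2 * l * (A - B) ^ 2) := by
      have : (2 + 6 * β) ^ 2 ≤ 64 := by nlinarith
      nlinarith [sq_nonneg (4 * l * (A - B) + (2 + 6 * β))]
    have h3 := nonneg_of_mul_nonneg_right h2 hl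
    linarith
  have T1 : s * (2 * (k1 * (1 - β))) * (vt ^ 2 + S) ≤ s * k * (2 * (1 - β) * (vt ^ 2 + S) + 2 * l * Q ^ 2) := by
    have e1 : k1 * (2 * (1 - β) * (vt ^ 2 + S)) ≤ k * (2 * (1 - β) * (vt ^ 2 + S)) :=
      mul_le_mul_of_nonneg_right hk (by positivity)
    have e2 : 0 ≤ k * (2 * l * Q ^ 2) := by positivity
    nlinarith [mul_le_mul_of_nonneg_left (add_le_add e1 e2) hs'.le]
  have T2 : s ^ 3 * (k1 ^ 3 * (2 * ((1 - β) * a))) * v ^ 2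
      ≤ v ^ 2 * ((s * k) ^ 3 * (4 * (1 - β) * A + (2 + 6 * β) * (A - B) + 2 * l * (A - B) ^ 2)) := by
    have e1 : k1 ^ 3 ≤ k ^ 3 := pow_le_pow_left₀ hk1.le hk 3
    have e2 : k1 ^ 3 * (2 * ((1 - β) * a)) ≤ k ^ 3 * (4 * (1 - β) * A + (2 + 6 * β) * (A - B) + 2 * l * (A - B) ^ 2) :=
      mul_le_mul e1 hbr (by positivity) (by positivity)
    calc _ = (s ^ 3 * v ^ 2) * (k1 ^ 3 * (2 * ((1 - β) * a))) := by ring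
      _ ≤ (s ^ 3 * v ^ 2) * _ := mul_le_mul_of_nonneg_left e2 (by positivity)
      _ = _ := by ring
  have T3 : 1 / 2 * (-2 * (1 + β) * (s * k)) ^ 2 * v ^ 2 ≤ s ^ 2 * (2 * (1 + β) ^ 2 * k2 ^ 2) * v ^ 2 := by
    have e1 : k ^ 2 ≤ k2 ^ 2 := pow_le_pow_left₀ hkp.le hk2 2
    calc _ = (2 * s ^ 2 * (1 + β) ^ 2 * v ^ 2) * k ^ 2 := by ring
      _ ≤ (2 * s ^ 2 * (1 + β) ^ 2 * v ^ 2) * k2 ^ 2 := mul_le_mul_of_nonneg_left e1 (by positivity)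
      _ = _ := by ring
  have T4 : s * (N * v ^ 2 / (4 * (k1 * (1 - β)))) ≤ s ^ 2 * (N / (4 * (k1 * (1 - β)))) * v ^ 2 := by
    have e1 : s ≤ s ^ 2 := by nlinarith
    calc _ = s * ((N / (4 * (k1 * (1 - β)))) * v ^ 2) := by ring
      _ ≤ s ^ 2 * ((N / (4 * (k1 * (1 - β)))) * v ^ 2) := mul_le_mul_of_nonneg_right e1 (by positivity)
      _ = _ := by ring
  have T5 := mul_le_mul_of_nonneg_left hs0 (by positivity : 0 ≤ s ^ 2 * v ^ 2)
  ring_nf at T1 T2 T3 T4 T5 hV ⊢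
  linarith

lemma bulk_pointwise {z : EuclideanSpace ℝ (Fin n) × ℝ → ℝ} (hz : ContDiff ℝ (⊤ : ℕ∞) z)
    {v : EuclideanSpace ℝ (Fin n) × ℝ → ℝ}
    (hv : v = fun q => Real.exp (Phi x₀ β C₀ l s q) * z q)
    (q : EuclideanSpace ℝ (Fin n) × ℝ) {k1 k2 a N : ℝ} (hβ0 : 0 < β) (hβ1 : β < 1) (hl : 0 < l)
    (hs : 1 ≤ s) (hk1 : 0 < k1) (hk : k1 ≤ kk x₀ β C₀ l q) (hk2 : kk x₀ β C₀ l q ≤ k2) (ha : 0 < a)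
    (hA : a ≤ AA x₀ β q) (hla : 4 ≤ l * ((1 - β) * a))
    (hs0 : 2 * (1 + β) ^ 2 * k2 ^ 2 + N / (4 * (k1 * (1 - β))) ≤ s * (k1 ^ 3 * ((1 - β) * a)))
    (hN : NN x₀ β C₀ l q ≤ N) :
    s * (k1 * (1 - β)) * (dd (eE n none) v q ^ 2 + SS v q)
      + s ^ 3 * (k1 ^ 3 * ((1 - β) * a)) * v q ^ 2
    ≤ ∑ b, epsE n b * dd (eE n b)
        (flux (eE n) (epsE n) (Phi x₀ β C₀ l s) (fun q => s * sig x₀ β C₀ l q) v b) q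
      + 1 / 2 * (Real.exp (Phi x₀ β C₀ l s q) * box (eE n) (epsE n) z q) ^ 2 := by
  have h1β : 0 < 1 - β := by linarith
  refine le_trans ?_ (pointwise_abstract (eE n) (epsE n) (Phi_contDiff x₀ β C₀ l s)
    (contDiff_const.mul (sig_contDiff x₀ β C₀ l)) hz q hv)
  have hκ : box (eE n) (epsE n) (Phi x₀ β C₀ l s) q - s * sig x₀ β C₀ l q
      = -2 * (1 + β) * (s * kk x₀ β C₀ l q) := by
    rw [box_Phi, sig]; ring
  rw [hκ, HH_Phi, HH_Phi, QQ_self, QQ_Phi_Phi, SS_Phi, QP_Phi, dd_Phi]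
  have hNN : 0 ≤ NN x₀ β C₀ l q := Finset.sum_nonneg fun a _ => sq_nonneg _
  have hSS : 0 ≤ SS v q := Finset.sum_nonneg fun a _ => sq_nonneg _
  have hV := (QQ_sig_lower x₀ β C₀ l s (f := v) q (δ := k1 * (1 - β)) (by positivity) (v q)).resolve_right
    (by linarith)
  have hV' : -(s * (k1 * (1 - β) * (dd (eE n none) v q ^ 2 + SS v q) + N * v q ^ 2 / (4 * (k1 * (1 - β)))))
      ≤ v q * QQ (eE n) (epsE n) (fun q => s * sig x₀ β C₀ l q) v q := by
    refine le_trans ?_ hV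
    have : 0 < s := by linarith
    gcongr
  have := bulk_numeric (B := dP x₀ β none q ^ 2) (Q := QP x₀ β v q)
    hβ0 hβ1 hl hs hk1 hk hk2 ha hA hla hSS hs0 (hNN.trans hN) hV'
  refine this.trans (le_of_eq ?_)
  ring

lemma back_pointwise {z : EuclideanSpace ℝ (Fin n) × ℝ → ℝ} (hz : ContDiff ℝ (⊤ : ℕ∞) z)
    {v : EuclideanSpace ℝ (Fin n) × ℝ → ℝ}
    (hv : v = fun q => Real.exp (Phi x₀ β C₀ l s q) * z q)
    (q : EuclideanSpace ℝ (Fin n) × ℝ) {k2 Y : ℝ} (hs : 0 ≤ s) (hk : 0 ≤ kk x₀ β C₀ l q)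
    (hk2 : kk x₀ β C₀ l q ≤ k2)
    (hY : dP x₀ β none q ^ 2 + AA x₀ β q ≤ Y) :
    s * (Real.exp (2 * Phi x₀ β C₀ l s q) * (dd (eE n none) z q ^ 2 + SS z q))
      + s ^ 3 * (Real.exp (2 * Phi x₀ β C₀ l s q) * z q ^ 2)
    ≤ 2 * s * (dd (eE n none) v q ^ 2 + SS v q) + s ^ 3 * (2 * k2 ^ 2 * Y + 1) * v q ^ 2 := by
  have hE : Real.exp (2 * Phi x₀ β C₀ l s q) = Real.exp (Phi x₀ β C₀ l s q) ^ 2 := by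
    rw [← Real.exp_nat_mul]; norm_num
  have h1 : ∀ b, Real.exp (Phi x₀ β C₀ l s q) ^ 2 * dd (eE n b) z q ^ 2
      ≤ 2 * dd (eE n b) v q ^ 2 + 2 * (s * kk x₀ β C₀ l q) ^ 2 * v q ^ 2 * dP x₀ β b q ^ 2 := by
    intro b
    have : dd (eE n b) v q = Real.exp (Phi x₀ β C₀ l s q) * (dd (eE n b) (Phi x₀ β C₀ l s) q * z q
      + dd (eE n b) z q) := by
      rw [hv]; exact conj_first (Phi_contDiff x₀ β C₀ l s) hz _ q
    have e2 : Real.exp (Phi x₀ β C₀ l s q) * dd (eE n b) z q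
        = dd (eE n b) v q - s * kk x₀ β C₀ l q * dP x₀ β b q * v q := by
      rw [this, dd_Phi, hv]; ring
    rw [← mul_pow, e2]
    nlinarith [sq_nonneg (dd (eE n b) v q + s * kk x₀ β C₀ l q * dP x₀ β b q * v q)]
  have h2 : Real.exp (Phi x₀ β C₀ l s q) ^ 2 * (dd (eE n none) z q ^ 2 + SS z q)
      ≤ 2 * (dd (eE n none) v q ^ 2 + SS v q)
        + 2 * (s * kk x₀ β C₀ l q) ^ 2 * v q ^ 2 * (dP x₀ β none q ^ 2 + AA x₀ β q) := by
    have h3 := Finset.sum_le_sum (s := Finset.univ) fun (i : Fin n) _ => h1 (some i)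
    rw [Finset.sum_add_distrib, ← Finset.mul_sum, ← Finset.mul_sum, ← Finset.mul_sum] at h3
    have h4 := h1 none
    unfold SS AA
    linarith
  have h5 : 2 * (s * kk x₀ β C₀ l q) ^ 2 * v q ^ 2 * (dP x₀ β none q ^ 2 + AA x₀ β q)
      ≤ 2 * (s * k2) ^ 2 * v q ^ 2 * Y := by
    have : 0 ≤ AA x₀ β q := Finset.sum_nonneg fun a _ => sq_nonneg _
    gcongr
  have h6 : Real.exp (Phi x₀ β C₀ l s q) ^ 2 * z q ^ 2 = v q ^ 2 := by rw [hv]; ring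
  rw [hE, h6]
  have := mul_le_mul_of_nonneg_left (h2.trans (add_le_add le_rfl h5)) hs
  refine (add_le_add this le_rfl).trans (le_of_eq ?_)
  ring

lemma bdry_numeric {s k k1 bT d D B0 v vt S W A g θ : ℝ} (hs : 1 ≤ s) (hk1 : 0 < k1) (hk : k1 ≤ k)
    (hd : 0 < d) (hdT : d < bT) (hS : 0 ≤ S) (hθ : θ = 1 ∨ θ = -1)
    (hA : A ≤ 4 * d ^ 2) (hW : W ^ 2 ≤ A * S) (hD : D = 4 * bT ^ 2 - 4 * d ^ 2)
    (hg : |g| ≤ B0)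
    (hs0 : B0 ^ 2 / (8 * (k1 * (bT - d))) ≤ s * (k1 ^ 3 * (D * (2 * bT)))) :
    θ * (2 * (vt * (s * k * (-2 * bT * θ * vt - W))) - s * k * (-2 * bT * θ) * (vt ^ 2 - S)
      + (s * k) ^ 2 * ((-2 * bT * θ) ^ 2 - A) * (s * k * (-2 * bT * θ) * v ^ 2)
      + s * g * (v * vt)) ≤ 0 := by
  have hs' : 0 < s := by linarith
  have hkp : 0 < k := by linarith
  have hbT : 0 < bT := by linarith
  have hθ2 : θ ^ 2 = 1 := by rcases hθ with h | h <;> rw [h] <;> norm_num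
  have hDp : 0 < D := by rw [hD]; nlinarith
  have hW2 : W ^ 2 ≤ 4 * d ^ 2 * S := hW.trans (mul_le_mul_of_nonneg_right hA hS)
  have hE : 0 ≤ vt ^ 2 + S := by positivity
  have e : θ * (2 * (vt * (s * k * (-2 * bT * θ * vt - W))) - s * k * (-2 * bT * θ) * (vt ^ 2 - S)
      + (s * k) ^ 2 * ((-2 * bT * θ) ^ 2 - A) * (s * k * (-2 * bT * θ) * v ^ 2)
      + s * g * (v * vt))
      = s * k * (-2 * bT * (vt ^ 2 + S) - 2 * θ * vt * W)
        - (s * k) ^ 3 * (4 * bT ^ 2 - A) * (2 * bT) * v ^ 2 + θ * (s * g * (v * vt)) := by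
    linear_combination (s * k * (-2 * bT * (vt ^ 2 + S)) - (s * k) ^ 3 * (4 * bT ^ 2 * (θ ^ 2 + 1) - A) * (2 * bT) * v ^ 2) * hθ2
  rw [e]
  have h1 : -2 * θ * vt * W ≤ 2 * d * (vt ^ 2 + S) := by
    have : 0 ≤ d * (2 * d * (vt ^ 2 + S) + 2 * θ * vt * W) := by
      have e2 : (2 * d * vt + θ * W) ^ 2 = 4 * d ^ 2 * vt ^ 2 + 4 * d * θ * vt * W + W ^ 2 := by
        linear_combination W ^ 2 * hθ2
      nlinarith [sq_nonneg (2 * d * vt + θ * W)]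
    have := nonneg_of_mul_nonneg_right this hd
    linarith
  have h2 : s * k * (-2 * bT * (vt ^ 2 + S) - 2 * θ * vt * W) ≤ - (s * k1 * (2 * (bT - d)) * vt ^ 2) := by
    have a1 : -2 * bT * (vt ^ 2 + S) - 2 * θ * vt * W ≤ - (2 * (bT - d) * vt ^ 2) := by
      have : 0 ≤ (bT - d) * S := mul_nonneg (by linarith) hS
      nlinarith
    have a2 : k1 * (2 * (bT - d) * vt ^ 2) ≤ k * (2 * (bT - d) * vt ^ 2) :=
      mul_le_mul_of_nonneg_right hk (mul_nonneg (by linarith) (sq_nonneg _))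
    have a3 := mul_le_mul_of_nonneg_left a1 (by positivity : 0 ≤ s * k)
    have a4 := mul_le_mul_of_nonneg_left a2 hs'.le
    nlinarith
  have h3 : s ^ 3 * (k1 ^ 3 * (D * (2 * bT))) * v ^ 2 ≤ (s * k) ^ 3 * (4 * bT ^ 2 - A) * (2 * bT) * v ^ 2 := by
    have b1 : k1 ^ 3 ≤ k ^ 3 := pow_le_pow_left₀ hk1.le hk 3
    have b2 : k1 ^ 3 * D ≤ k ^ 3 * (4 * bT ^ 2 - A) :=
      mul_le_mul b1 (by linarith) hDp.le (by positivity)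
    calc _ = (s ^ 3 * (2 * bT) * v ^ 2) * (k1 ^ 3 * D) := by ring
      _ ≤ (s ^ 3 * (2 * bT) * v ^ 2) * (k ^ 3 * (4 * bT ^ 2 - A)) := mul_le_mul_of_nonneg_left b2 (by positivity)
      _ = _ := by ring
  have hη : 0 < k1 * (bT - d) := mul_pos hk1 (by linarith)
  have h4 : θ * (g * (v * vt)) ≤ 2 * (k1 * (bT - d)) * vt ^ 2 + B0 ^ 2 / (8 * (k1 * (bT - d))) * v ^ 2 := by
    have c1 : g ^ 2 ≤ B0 ^ 2 := sq_le_sq' (by linarith [(abs_le.mp hg).1]) (abs_le.mp hg).2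
    have c2 : g ^ 2 / (8 * (k1 * (bT - d))) * v ^ 2 ≤ B0 ^ 2 / (8 * (k1 * (bT - d))) * v ^ 2 := by
      gcongr
    have c3 : 2 * (k1 * (bT - d)) * vt ^ 2 + g ^ 2 / (8 * (k1 * (bT - d))) * v ^ 2 - θ * (g * (v * vt))
        = (4 * (k1 * (bT - d)) * vt - θ * g * v) ^ 2 / (8 * (k1 * (bT - d))) := by
      generalize k1 * (bT - d) = w at hη
      field_simp
      linear_combination - (g ^ 2 * v ^ 2) * hθ2
    have c4 : 0 ≤ (4 * (k1 * (bT - d)) * vt - θ * g * v) ^ 2 / (8 * (k1 * (bT - d))) := by positivity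
    linarith
  have h5 := mul_le_mul_of_nonneg_left h4 hs'.le
  have h6 := mul_le_mul_of_nonneg_left hs0 (by positivity : 0 ≤ s ^ 2 * v ^ 2)
  have h7 : s * (B0 ^ 2 / (8 * (k1 * (bT - d))) * v ^ 2) ≤ s ^ 2 * v ^ 2 * (B0 ^ 2 / (8 * (k1 * (bT - d)))) := by
    have : s ≤ s ^ 2 := by nlinarith
    have := mul_le_mul_of_nonneg_right this (by positivity : 0 ≤ B0 ^ 2 / (8 * (k1 * (bT - d))) * v ^ 2)
    linarith
  ring_nf at h2 h3 h5 h6 h7 ⊢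
  linarith

lemma bdry_pointwise (v : EuclideanSpace ℝ (Fin n) × ℝ → ℝ) (x : EuclideanSpace ℝ (Fin n)) {T : ℝ}
    {k1 d B0 θ : ℝ} (hs : 1 ≤ s) (hk1 : 0 < k1) (hk : k1 ≤ kk x₀ β C₀ l (x, θ * T))
    (hd : 0 < d) (hdT : d < β * T) (hθ : θ = 1 ∨ θ = -1) (hx : ‖x - x₀‖ ≤ d)
    (hg : |sig x₀ β C₀ l (x, θ * T)| ≤ B0)
    (hs0 : B0 ^ 2 / (8 * (k1 * (β * T - d)))
      ≤ s * (k1 ^ 3 * ((4 * (β * T) ^ 2 - 4 * d ^ 2) * (2 * (β * T))))) :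
    θ * flux (eE n) (epsE n) (Phi x₀ β C₀ l s) (fun q => s * sig x₀ β C₀ l q) v none (x, θ * T) ≤ 0 := by
  unfold flux
  rw [QQ_Phi, QQ_self, QQ_Phi_Phi, QP_eq, dd_Phi]
  have hSS : 0 ≤ SS v (x, θ * T) := Finset.sum_nonneg fun a _ => sq_nonneg _
  have hA : AA x₀ β (x, θ * T) ≤ 4 * d ^ 2 := by
    rw [AA_eq]
    have : ‖x - x₀‖ ^ 2 ≤ d ^ 2 := pow_le_pow_left₀ (norm_nonneg _) hx 2
    simpa using this
  have hW : (∑ i, dP x₀ β (some i) (x, θ * T) * dd (eE n (some i)) v (x, θ * T)) ^ 2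
      ≤ AA x₀ β (x, θ * T) * SS v (x, θ * T) := Finset.sum_mul_sq_le_sq_mul_sq _ _ _
  have h := bdry_numeric (v := v (x, θ * T)) (vt := dd (eE n none) v (x, θ * T))
    hs hk1 hk hd hdT hSS hθ hA hW rfl hg hs0
  have e : dP x₀ β none (x, θ * T) = -2 * (β * T) * θ := by simp [dP]; ring
  simp only [e]
  refine le_trans (le_of_eq ?_) h
  ring

end estimates

/-! ### Dictionary with the notions of the statement -/

lemma dict_time {n : ℕ} {z : EuclideanSpace ℝ (Fin n) → ℝ → ℝ}
    (hz : ContDiff ℝ (⊤ : ℕ∞) (fun q : EuclideanSpace ℝ (Fin n) × ℝ => z q.1 q.2)) (x) :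
    deriv (z x) = fun t => dd (eE n none) (fun q => z q.1 q.2) (x, t) :=
  funext fun t => (dd_time hz x t).deriv

lemma dict_grad {n : ℕ} {z : EuclideanSpace ℝ (Fin n) → ℝ → ℝ}
    (hz : ContDiff ℝ (⊤ : ℕ∞) (fun q : EuclideanSpace ℝ (Fin n) × ℝ => z q.1 q.2)) (x) (t) :
    ‖gradient (fun y => z y t) x‖ ^ 2 = SS (fun q => z q.1 q.2) (x, t) := by
  rw [EuclideanSpace.real_norm_sq_eq]
  unfold SS
  refine Finset.sum_congr rfl fun i _ => ?_
  rw [← dd_space hz x t i]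
  congr 1
  have h1 : inner ℝ (gradient (fun y => z y t) x) (EuclideanSpace.single i (1:ℝ))
      = fderiv ℝ (fun y => z y t) x (EuclideanSpace.single i 1) := by
    unfold gradient
    exact InnerProductSpace.toDual_symm_apply
  refine Eq.trans ?_ h1
  rw [EuclideanSpace.inner_single_right]
  simp

lemma dict_box {n : ℕ} {z : EuclideanSpace ℝ (Fin n) → ℝ → ℝ}
    (hz : ContDiff ℝ (⊤ : ℕ∞) (fun q : EuclideanSpace ℝ (Fin n) × ℝ => z q.1 q.2)) (x) (t) :
    deriv (deriv (z x)) t - lap (fun y => z y t) x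
      = box (eE n) (epsE n) (fun q => z q.1 q.2) (x, t) := by
  unfold box lap
  rw [dict_time hz, Fintype.sum_option, (dd_time (dd_contDiff hz (eE n none)) x t).deriv]
  simp only [epsE]
  rw [← Finset.mul_sum]
  have : ∀ i : Fin n, fderiv ℝ (fun y => fderiv ℝ (fun y => z y t) y (EuclideanSpace.single i 1)) x
      (EuclideanSpace.single i 1) = dd (eE n (some i)) (dd (eE n (some i)) (fun q => z q.1 q.2)) (x, t) := by
    intro i
    rw [← dd_space (dd_contDiff hz (eE n (some i))) x t i]
    congr 2
    funext y
    exact dd_space hz y t i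
  simp_rw [this]
  ring

lemma compact_bound {X : Type*} [TopologicalSpace X] {S : Set X} (hS : IsCompact S) {f : X → ℝ}
    (hf : Continuous f) : ∃ C > 0, ∀ q ∈ S, |f q| ≤ C := by
  obtain ⟨C, hC⟩ := hS.exists_bound_of_continuousOn hf.continuousOn
  exact ⟨max C 1, by positivity, fun q hq => (hC q hq).trans (le_max_left _ _)⟩

/-- **Carleman estimate in large time (Theorem 2.5)** specialized to functions supported, in the
space variable, in a compact subset of `Ω` (no vanishing required at `t = ±T`):
`s∫∫ e^{2sφ}(|∂ₜz|² + |∇z|²) + s³∫∫ e^{2sφ}z² ≤ M∫∫ e^{2sφ}|∂ₜ²z - Δz|²`. -/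
theorem carleman_large_time
    (n : ℕ) (hn : 1 ≤ n)
    (Ω : Set (EuclideanSpace ℝ (Fin n))) (hΩo : IsOpen Ω) (hΩb : Bornology.IsBounded Ω)
    (T : ℝ) (hT : 0 < T)
    (x₀ : EuclideanSpace ℝ (Fin n)) (hx₀ : x₀ ∉ closure Ω)
    (β : ℝ) (hβ : β ∈ Set.Ioo (0:ℝ) 1)
    (htime : sSup ((fun x => ‖x - x₀‖) '' Ω) < β * T)
    (C₀ : ℝ) (hC₀ : 0 < C₀)
    (hψ : ∀ x ∈ Ω, ∀ t ∈ Set.Ioo (-T) T, 1 ≤ psi x₀ β C₀ x t) :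
    ∃ l > (0:ℝ), ∃ s₀ > (0:ℝ), ∃ M > (0:ℝ), ∀ s ≥ s₀,
      ∀ z : EuclideanSpace ℝ (Fin n) → ℝ → ℝ,
        ContDiff ℝ (⊤ : ℕ∞) (fun q : EuclideanSpace ℝ (Fin n) × ℝ => z q.1 q.2) →
        (∃ K : Set (EuclideanSpace ℝ (Fin n)), IsCompact K ∧ K ⊆ Ω ∧
          ∀ x ∉ K, ∀ t : ℝ, z x t = 0) →
        s * (∫ t in Set.Ioo (-T) T, ∫ x in Ω, Real.exp (2 * s * phi x₀ β C₀ l x t) *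
              ((deriv (z x) t) ^ 2 + ‖gradient (fun y => z y t) x‖ ^ 2))
          + s ^ 3 * (∫ t in Set.Ioo (-T) T, ∫ x in Ω,
              Real.exp (2 * s * phi x₀ β C₀ l x t) * (z x t) ^ 2)
        ≤ M * ∫ t in Set.Ioo (-T) T, ∫ x in Ω, Real.exp (2 * s * phi x₀ β C₀ l x t) *
            (deriv (deriv (z x)) t - lap (fun y => z y t) x) ^ 2 := by
  obtain ⟨hβ0, hβ1⟩ := hβ
  have h1β : 0 < 1 - β := by linarith
  have hβT : 0 < β * T := mul_pos hβ0 hT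
  -- distances
  have hbdd : BddAbove ((fun x => ‖x - x₀‖) '' Ω) := by
    obtain ⟨R, hR⟩ := hΩb.exists_norm_le
    refine ⟨R + ‖x₀‖, ?_⟩
    rintro _ ⟨x, hx, rfl⟩
    exact (norm_sub_le _ _).trans (by linarith [hR x hx])
  obtain ⟨d, hd, hdT, hdx⟩ : ∃ d, 0 < d ∧ d < β * T ∧ ∀ x ∈ Ω, ‖x - x₀‖ ≤ d := by
    refine ⟨max (sSup ((fun x => ‖x - x₀‖) '' Ω)) (β * T / 2), ?_, ?_, fun x hx => ?_⟩
    · exact lt_max_of_lt_right (by linarith)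
    · exact max_lt htime (by linarith)
    · exact (le_csSup hbdd ⟨x, hx, rfl⟩).trans (le_max_left _ _)
  obtain ⟨a, ha, hax⟩ : ∃ a > 0, ∀ x ∈ Ω, ∀ t, a ≤ AA x₀ β (x, t) := by
    obtain ⟨r, hr, hb⟩ := Metric.isOpen_iff.mp (isClosed_closure (s := Ω)).isOpen_compl x₀ hx₀
    refine ⟨4 * r ^ 2, by positivity, fun x hx t => ?_⟩
    rw [AA_eq]
    have : r ≤ ‖x - x₀‖ := by
      by_contra hlt
      push Not at hlt
      exact hb (by rwa [Metric.mem_ball, dist_eq_norm]) (subset_closure hx)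
    have := pow_le_pow_left₀ hr.le this 2
    simpa using this
  set l : ℝ := 4 / ((1 - β) * a) with hl_def
  have hl : 0 < l := by positivity
  have hla : 4 ≤ l * ((1 - β) * a) := by
    rw [hl_def, div_mul_cancel₀]; positivity
  -- compactness bounds
  have hcomp : IsCompact (closure Ω ×ˢ Icc (-T) T) := hΩb.isCompact_closure.prod isCompact_Icc
  have hkpos : ∀ q, 0 < kk x₀ β C₀ l q := fun q => mul_pos hl (Real.exp_pos _)
  obtain ⟨k2, hk2p, hk2⟩ := compact_bound hcomp (kk_contDiff x₀ β C₀ l).continuous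
  obtain ⟨κ, hκp, hκ⟩ := compact_bound hcomp
    ((kk_contDiff x₀ β C₀ l).continuous.inv₀ fun q => (hkpos q).ne')
  obtain ⟨B0, hB0p, hB0⟩ := compact_bound hcomp (sig_contDiff x₀ β C₀ l).continuous
  obtain ⟨N, hNp, hN⟩ := compact_bound hcomp (NN_continuous x₀ β C₀ l)
  obtain ⟨Y, hYp, hY⟩ := compact_bound hcomp
    (((dP_contDiff x₀ β none).continuous.pow 2).add (AA_contDiff x₀ β).continuous)
  obtain ⟨k1, hk1p, hk1⟩ : ∃ k1 > 0, ∀ q ∈ closure Ω ×ˢ Icc (-T) T, k1 ≤ kk x₀ β C₀ l q := by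
    refine ⟨κ⁻¹, by positivity, fun q hq => ?_⟩
    have := (le_abs_self _).trans (hκ q hq)
    exact inv_le_of_inv_le₀ (hkpos q) this
  have hDp : 0 < 4 * (β * T) ^ 2 - 4 * d ^ 2 := by nlinarith
  set c1 := k1 * (1 - β) with hc1
  set c2 := k1 ^ 3 * ((1 - β) * a) with hc2
  set c3 := k1 ^ 3 * ((4 * (β * T) ^ 2 - 4 * d ^ 2) * (2 * (β * T))) with hc3
  have hc1p : 0 < c1 := by positivity
  have hc2p : 0 < c2 := by positivity
  have hc3p : 0 < c3 := by positivity
  set R1 := 2 * (1 + β) ^ 2 * k2 ^ 2 + N / (4 * (k1 * (1 - β))) with hR1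
  set R2 := B0 ^ 2 / (8 * (k1 * (β * T - d))) with hR2
  set C := 2 / c1 + (2 * k2 ^ 2 * Y + 1) / c2 with hC
  have hCp : 0 < C := by positivity
  refine ⟨l, hl, max 1 (max (R1 / c2) (R2 / c3)), by positivity, C / 2, by positivity, ?_⟩
  intro s hs z hz ⟨K, hK, hKΩ, hK0⟩
  have hs1 : 1 ≤ s := (le_max_left _ _).trans hs
  have hs2 : R1 ≤ s * c2 := by
    rw [← div_le_iff₀ hc2p]
    exact ((le_max_left _ _).trans (le_max_right _ _)).trans hs
  have hs3 : R2 ≤ s * c3 := by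
    rw [← div_le_iff₀ hc3p]
    exact ((le_max_right _ _).trans (le_max_right _ _)).trans hs
  have hsp : 0 < s := by linarith
  -- notation
  set w : EuclideanSpace ℝ (Fin n) × ℝ → ℝ := fun q => z q.1 q.2 with hw
  set Φ := Phi x₀ β C₀ l s with hΦdef
  have hΦ : ContDiff ℝ (⊤ : ℕ∞) Φ := Phi_contDiff x₀ β C₀ l s
  set v : EuclideanSpace ℝ (Fin n) × ℝ → ℝ := fun q => Real.exp (Φ q) * w q with hv
  have hvs : ContDiff ℝ (⊤ : ℕ∞) v := hΦ.exp.mul hz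
  set F := flux (eE n) (epsE n) Φ (fun q => s * sig x₀ β C₀ l q) v with hF
  have hFs : ∀ b, ContDiff ℝ (⊤ : ℕ∞) (F b) := fun b =>
    flux_contDiff (eE n) (epsE n) hΦ (contDiff_const.mul (sig_contDiff x₀ β C₀ l)) hvs b
  have hw0 : ∀ x ∉ K, ∀ t, w (x, t) = 0 := hK0
  have hv0 : ∀ x ∉ K, ∀ t, v (x, t) = 0 := fun x hx t => by simp [hv, hw0 x hx t]
  have hdw0 := fun b => dd_zero_off hK hw0 (eE n b)
  have hdv0 := fun b => dd_zero_off hK hv0 (eE n b)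
  have hF0 : ∀ b, ∀ x ∉ K, ∀ t, F b (x, t) = 0 := by
    intro b x hx t
    have : QQ (eE n) (epsE n) v v (x, t) = 0 := by
      unfold QQ
      exact Finset.sum_eq_zero fun b _ => by rw [hdv0 b x hx t]; ring
    simp only [hF, flux]
    rw [this, hdv0 b x hx t, hv0 x hx t]; ring
  have hphi : ∀ x t, 2 * s * phi x₀ β C₀ l x t = 2 * Φ (x, t) := by
    intro x t; simp only [hΦdef, Phi, phi, Psi]; ring
  simp only [dict_box hz]
  simp only [dict_grad hz, dict_time hz, hphi]
  -- the three integrands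
  set G1 : EuclideanSpace ℝ (Fin n) × ℝ → ℝ :=
    fun q => Real.exp (2 * Φ q) * (dd (eE n none) w q ^ 2 + SS w q) with hG1
  set G2 : EuclideanSpace ℝ (Fin n) × ℝ → ℝ := fun q => Real.exp (2 * Φ q) * w q ^ 2 with hG2
  set G3 : EuclideanSpace ℝ (Fin n) × ℝ → ℝ :=
    fun q => Real.exp (2 * Φ q) * box (eE n) (epsE n) w q ^ 2 with hG3
  set G4 : EuclideanSpace ℝ (Fin n) × ℝ → ℝ :=
    fun q => ∑ b, epsE n b * dd (eE n b) (F b) q with hG4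
  have hexpc : Continuous fun q => Real.exp (2 * Φ q) :=
    Real.continuous_exp.comp (continuous_const.mul hΦ.continuous)
  have hwc : Continuous w := hz.continuous
  have hdc := fun b => (dd_contDiff hz (eE n b)).continuous
  have hddc := fun b => (dd_contDiff (dd_contDiff hz (eE n b)) (eE n b)).continuous
  have c1c : Continuous G1 := by
    refine hexpc.mul (((hdc none).pow 2).add ?_)
    exact continuous_finsetSum _ fun i _ => (hdc (some i)).pow 2
  have c2c : Continuous G2 := hexpc.mul (hwc.pow 2)
  have c3c : Continuous G3 := by
    refine hexpc.mul (Continuous.pow ?_ 2)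
    exact continuous_finsetSum _ fun b _ => continuous_const.mul (hddc b)
  have c4c : Continuous G4 :=
    continuous_finsetSum _ fun b _ => continuous_const.mul (dd_contDiff (hFs b) _).continuous
  have z1 : ∀ x ∉ K, ∀ t, G1 (x, t) = 0 := fun x hx t => by
    have : SS w (x, t) = 0 := Finset.sum_eq_zero fun i _ => by rw [hdw0 (some i) x hx t]; ring
    simp only [hG1]
    rw [this, hdw0 none x hx t]; ring
  have z2 : ∀ x ∉ K, ∀ t, G2 (x, t) = 0 := fun x hx t => by
    simp only [hG2]; rw [hw0 x hx t]; ring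
  have z3 : ∀ x ∉ K, ∀ t, G3 (x, t) = 0 := fun x hx t => by
    have : box (eE n) (epsE n) w (x, t) = 0 := Finset.sum_eq_zero fun b _ => by
      rw [dd_zero_off hK (hdw0 b) (eE n b) x hx t]; ring
    simp only [hG3]
    rw [this]; ring
  have z4 : ∀ x ∉ K, ∀ t, G4 (x, t) = 0 := fun x hx t =>
    Finset.sum_eq_zero fun b _ => by rw [dd_zero_off hK (hF0 b) (eE n b) x hx t]; ring
  have hΩm := hΩo.measurableSet
  have i1 := st_integrable T hΩm hK c1c z1
  have i2 := st_integrable T hΩm hK c2c z2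
  have i3 := st_integrable T hΩm hK c3c z3
  have i4 := st_integrable T hΩm hK c4c z4
  change s * (∫ t in Ioo (-T) T, ∫ x in Ω, G1 (x, t)) + s ^ 3 * (∫ t in Ioo (-T) T, ∫ x in Ω, G2 (x, t))
    ≤ C / 2 * ∫ t in Ioo (-T) T, ∫ x in Ω, G3 (x, t)
  rw [st_integral T hΩm hK c1c z1, st_integral T hΩm hK c2c z2, st_integral T hΩm hK c3c z3]
  -- divergence
  have hdiv := integral_div hT hΩm hK hKΩ hFs hF0 (by
    intro x hx
    have hm : ∀ θ : ℝ, (θ = 1 ∨ θ = -1) → (x, θ * T) ∈ closure Ω ×ˢ Icc (-T) T := by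
      intro θ hθ
      refine ⟨subset_closure hx, ?_⟩
      rcases hθ with h | h <;> rw [h] <;> constructor <;> simp only <;> linarith
    have key : ∀ θ : ℝ, (θ = 1 ∨ θ = -1) → θ * F none (x, θ * T) ≤ 0 := fun θ hθ =>
      bdry_pointwise x₀ β C₀ l s v x hs1 hk1p (hk1 _ (hm θ hθ)) hd hdT hθ (hdx x hx)
        (hB0 _ (hm θ hθ)) hs3
    have e1 := key 1 (Or.inl rfl)
    have e2 := key (-1) (Or.inr rfl)
    rw [one_mul, one_mul] at e1
    rw [neg_one_mul, neg_one_mul] at e2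
    exact ⟨e1, by linarith⟩)
  -- pointwise bound
  have hpt : ∀ x ∈ Ω, ∀ t ∈ Ioo (-T) T,
      s * G1 (x, t) + s ^ 3 * G2 (x, t) ≤ C * G4 (x, t) + C / 2 * G3 (x, t) := by
    intro x hx t ht
    have hm : (x, t) ∈ closure Ω ×ˢ Icc (-T) T := ⟨subset_closure hx, ht.1.le, ht.2.le⟩
    have hk2' := (le_abs_self _).trans (hk2 _ hm)
    have b1 := bulk_pointwise x₀ β C₀ l s hz hv (x, t) hβ0 hβ1 hl hs1 hk1p (hk1 _ hm) hk2' ha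
      (hax x hx t) hla hs2 ((le_abs_self _).trans (hN _ hm))
    have b2 := back_pointwise x₀ β C₀ l s hz hv (x, t) hsp.le (hkpos _).le hk2'
      ((le_abs_self _).trans (hY _ hm))
    have hEE : Real.exp (2 * Φ (x, t)) = Real.exp (Φ (x, t)) ^ 2 := by
      rw [← Real.exp_nat_mul]; norm_num
    have hG3' : G3 (x, t) = (Real.exp (Φ (x, t)) * box (eE n) (epsE n) w (x, t)) ^ 2 := by
      simp only [hG3]; rw [hEE]; ring
    rw [hG3']
    refine le_trans b2 ?_
    have b3 := mul_le_mul_of_nonneg_left b1 hCp.le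
    have hE0 : 0 ≤ dd (eE n none) v (x, t) ^ 2 + SS v (x, t) :=
      add_nonneg (sq_nonneg _) (Finset.sum_nonneg fun i _ => sq_nonneg _)
    have hCc1 : 2 ≤ C * c1 := by
      have : C * c1 = 2 + (2 * k2 ^ 2 * Y + 1) / c2 * c1 := by
        rw [hC, add_mul, div_mul_cancel₀ _ hc1p.ne']
      have h0 : 0 ≤ (2 * k2 ^ 2 * Y + 1) / c2 * c1 := by positivity
      linarith
    have hCc2 : 2 * k2 ^ 2 * Y + 1 ≤ C * c2 := by
      have : C * c2 = 2 / c1 * c2 + (2 * k2 ^ 2 * Y + 1) := by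
        rw [hC, add_mul, div_mul_cancel₀ _ hc2p.ne']
      have h0 : 0 ≤ 2 / c1 * c2 := by positivity
      linarith
    have b4 := mul_le_mul_of_nonneg_right hCc1 (mul_nonneg hsp.le hE0)
    have b5 := mul_le_mul_of_nonneg_right hCc2 (by positivity : 0 ≤ s ^ 3 * v (x, t) ^ 2)
    have b6 : C * (s * c1 * (dd (eE n none) v (x, t) ^ 2 + SS v (x, t)) + s ^ 3 * c2 * v (x, t) ^ 2)
        ≤ C * (G4 (x, t) + 1 / 2 * (Real.exp (Φ (x, t)) * box (eE n) (epsE n) w (x, t)) ^ 2) := b3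
    linarith
  have hmono : ∫ p : ℝ × EuclideanSpace ℝ (Fin n), (s * G1 (p.2, p.1) + s ^ 3 * G2 (p.2, p.1))
        ∂((volume.restrict (Ioo (-T) T)).prod (volume.restrict Ω))
      ≤ ∫ p : ℝ × EuclideanSpace ℝ (Fin n), (C * G4 (p.2, p.1) + C / 2 * G3 (p.2, p.1))
        ∂((volume.restrict (Ioo (-T) T)).prod (volume.restrict Ω)) := by
    refine integral_mono_ae ((i1.const_mul s).add (i2.const_mul (s ^ 3)))
      ((i4.const_mul C).add (i3.const_mul (C / 2))) ?_
    rw [Measure.prod_restrict]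
    filter_upwards [ae_restrict_mem (measurableSet_Ioo.prod hΩm)] with p hp
    exact hpt p.2 hp.2 p.1 hp.1
  rw [integral_add (i1.const_mul s) (i2.const_mul (s ^ 3)),
    integral_add (i4.const_mul C) (i3.const_mul (C / 2)), integral_const_mul, integral_const_mul,
    integral_const_mul, integral_const_mul] at hmono
  have hneg := mul_nonpos_of_nonneg_of_nonpos hCp.le hdiv
  linarith
end
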